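/- If n > 6^d φ, then the Kolmogorov distance D_V of the normalized covered volume V from the standard normal satisfies D_V ≤ (μ_V/(5 σ_V²)) · ( √( 11 φ²/σ_V + 5 √(η_V(n,ρ))/√n ) + 2φ/√σ_V )². -/

import Mathlib

open MeasureTheory ProbabilityTheory Filter Set Metric
open scoped ENNReal NNReal BigOperators Topology Classical

noncomputable section

/-- Side length `n^(1/d)` of the cube `C_n` of volume `n` in dimension `d`. -/
def sideLen (d n : ℕ) : ℝ := (n : ℝ) ^ ((d : ℝ)⁻¹)

/-- The cube `C_n = [0, L)^d`. -/
def box (d : ℕ) (L : ℝ) : Set (Fin d → ℝ) := Set.univ.pi fun _ => Set.Ico (0 : ℝ) L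

/-- The Euclidean toroidal distance on the cube `[0, L)^d`. -/
def torDist {d : ℕ} (L : ℝ) (x y : Fin d → ℝ) : ℝ :=
  Real.sqrt (∑ i, (⨅ k : ℤ, |x i - y i - k * L|) ^ 2)

/-- The toroidal ball `B_r(x) = {y ∈ C_n : D(x,y) ≤ r}`. -/
def torBall {d : ℕ} (L : ℝ) (x : Fin d → ℝ) (r : ℝ) : Set (Fin d → ℝ) :=
  {y ∈ box d L | torDist L x y ≤ r}

/-- Addition (translation) in the torus `[0, L)^d`. -/
def torAdd {d : ℕ} (L : ℝ) (y x : Fin d → ℝ) : Fin d → ℝ :=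
  fun i => L * Int.fract ((y i + x i) / L)

/-- The uniform probability measure on the cube `[0, L)^d`. -/
def uniformBox (d : ℕ) (L : ℝ) : Measure (Fin d → ℝ) :=
  ((L.toNNReal ^ d)⁻¹ : ℝ≥0) • volume.restrict (box d L)

/-- The joint law of `n` independent points uniformly distributed on the cube `C_n`
of volume `n`; a point configuration is `ω : Fin n → (Fin d → ℝ)`, with `U_i = ω i`. -/
def binppLaw (d n : ℕ) : Measure (Fin n → Fin d → ℝ) :=
  Measure.pi fun _ => uniformBox d (sideLen d n)

/-- The total covered volume `V` of the union of toroidal balls of radius `ρ`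
centered at the `n` points. -/
def coveredVol (d n : ℕ) (ρ : ℝ) (ω : Fin n → Fin d → ℝ) : ℝ :=
  (volume (⋃ i, torBall (sideLen d n) (ω i) ρ)).toReal

/-- The number `S` of isolated points: indices `i` with `𝒰_n ∩ B_ρ(U_i) = {U_i}`. -/
def isolCount (d n : ℕ) (ρ : ℝ) (ω : Fin n → Fin d → ℝ) : ℝ :=
  ∑ i, if Set.range ω ∩ torBall (sideLen d n) (ω i) ρ = {ω i} then 1 else 0

/-- `π_d`: the volume of the unit ball in `ℝ^d`. -/
def unitBallVol (d : ℕ) : ℝ :=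
  (volume (Metric.closedBall (0 : EuclideanSpace ℝ (Fin d)) 1)).toReal

/-- `φ = π_d ρ^d`. -/
def phi (d : ℕ) (ρ : ℝ) : ℝ := unitBallVol d * ρ ^ d

/-- The standard normal cumulative distribution function. -/
def stdGaussCDF (t : ℝ) : ℝ := (gaussianReal 0 1 (Set.Iic t)).toReal

/-- The Kolmogorov distance `D_X` between the law of the standardized version of `X`
and the standard normal. -/
def kolDist {Ω : Type*} [MeasurableSpace Ω] (P : Measure Ω) (X : Ω → ℝ) : ℝ :=
  ⨆ t : ℝ,
    |(P {ω | (X ω - ∫ x, X x ∂P) / Real.sqrt (variance X P) ≤ t}).toReal - stdGaussCDF t|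

/-- A fixed unit vector in `ℝ^d` (junk value `0` if `d = 0`). -/
def unitVec (d : ℕ) : EuclideanSpace ℝ (Fin d) :=
  if h : 0 < d then EuclideanSpace.single (⟨0, h⟩ : Fin d) 1 else 0

/-- `ω_d(r)`: the volume of the union of two unit balls in `ℝ^d` whose centers are
at distance `r` apart. -/
def omegaVol (d : ℕ) (r : ℝ) : ℝ :=
  (volume (Metric.closedBall (0 : EuclideanSpace ℝ (Fin d)) 1 ∪
      Metric.closedBall (r • unitVec d) 1)).toReal

/-- The integral `J_{r,d}(ρ) = d π_d ∫_0^r exp(-ρ^d ω_d(t)) t^{d-1} dt`. -/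
def Jint (r : ℝ) (d : ℕ) (ρ : ℝ) : ℝ :=
  d * unitBallVol d * ∫ t in (0:ℝ)..r, Real.exp (-(ρ ^ d * omegaVol d t)) * t ^ (d - 1)

/-- The limiting variance density `g_V(ρ)`. -/
def gV (d : ℕ) (ρ : ℝ) : ℝ :=
  ρ ^ d * Jint 2 d ρ - (2 ^ d * phi d ρ + phi d ρ ^ 2) * Real.exp (-(2 * phi d ρ))

/-- The limiting variance density `g_S(ρ)`. -/
def gS (d : ℕ) (ρ : ℝ) : ℝ :=
  Real.exp (-phi d ρ) - (1 + (2 ^ d - 2) * phi d ρ + phi d ρ ^ 2) * Real.exp (-(2 * phi d ρ))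
    + ρ ^ d * (Jint 2 d ρ - Jint 1 d ρ)

/-- `κ_d`: the maximum number of closed unit balls in `ℝ^d` that can be packed so that
they all intersect a closed unit ball at the origin but are pairwise disjoint. -/
def kappa (d : ℕ) : ℕ :=
  sSup {k : ℕ | ∃ c : Fin k → EuclideanSpace ℝ (Fin d),
    (∀ i, (Metric.closedBall (c i) 1 ∩ Metric.closedBall 0 1).Nonempty) ∧
    Pairwise fun i j => Disjoint (Metric.closedBall (c i) 1) (Metric.closedBall (c j) 1)}

/-- `η_V(n, ρ)`. -/
def etaV (d n : ℕ) (ρ : ℝ) : ℝ :=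
  2 * phi d ρ ^ 2 * ((3 ^ d + 1) * phi d ρ + 1) ^ 2 *
      (1 + (2 ^ d + 1) * 6 ^ d * phi d ρ +
        ((2 * n - 6 ^ d * phi d ρ) / (n - 6 ^ d * phi d ρ)) * 6 ^ (2 * d) * phi d ρ ^ 2) +
    2 * phi d ρ ^ 4 *
      (3 * (4 ^ d + 2 ^ d) * phi d ρ +
        3 * 4 ^ d * phi d ρ ^ 2 * ((2 * n - 3 * 2 ^ d * phi d ρ) / (n - 3 * 2 ^ d * phi d ρ)) +
        4 + 2 / n)

/-- `η_S(n, ρ)`. -/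
def etaS (d n : ℕ) (ρ : ℝ) : ℝ :=
  2 * (1 + 2 * (kappa d : ℝ)) ^ 2 *
      (1 + (2 ^ d + 1) * 3 ^ d * phi d ρ +
        ((2 * n - 3 ^ d * phi d ρ) / (n - 3 ^ d * phi d ρ)) * 9 ^ d * phi d ρ ^ 2) +
    (((1 : ℝ) + kappa d) ^ 2 / 2) *
      ((2 ^ d + 2 * 3 ^ d + 3) * phi d ρ +
        (2 ^ (d + 1) + 1) *
          ((2 * n - (2 ^ (d + 1) + 1) * phi d ρ) / (n - (2 ^ (d + 1) + 1) * phi d ρ)) *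
          phi d ρ ^ 2 +
        (4 * n - 2) / (n - 1))

/-!
Stein's method for a sum of local contributions. Resampling one point at a time from the kernel of
its grain telescopes to `E[(V - EV) g(U)] = E[N g(U)]`, where `N` is a positive functional of the
increments of `g`. Taking `g = V`, the variable `T = N V` has mean `Var V`, and changing one point
changes it by a bounded amount, so Efron–Stein bounds `Var T`. Taking `g = f ∘ V`, with `f` the
solution of Stein's equation for a smoothed indicator, `N g - f' T` is a Taylor remainder: it is
controlled by the concentration of `V` near the jump, which in turn is bounded by the Kolmogorov
distance itself. Optimising the smoothing width gives the bound.
-/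

local notation "γ" => gaussianReal 0 1

section BoundedFunctions

variable {Ω : Type*} [MeasurableSpace Ω] {P : Measure Ω} {f : Ω → ℝ} {C : ℝ}

theorem integrable_of_abs_le [IsFiniteMeasure P] (hf : Measurable f) (hC : ∀ ω, |f ω| ≤ C) :
    Integrable f P :=
  .of_bound hf.aestronglyMeasurable C (ae_of_all _ hC)

theorem abs_integral_le_of_abs_le [IsProbabilityMeasure P] (hC : ∀ ω, |f ω| ≤ C) :
    |∫ ω, f ω ∂P| ≤ C := by
  have hnorm : ∀ ω, ‖f ω‖ ≤ C := hC
  simpa using norm_integral_le_of_norm_le_const (ae_of_all P hnorm)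

theorem integral_abs_sub_integral_le_sqrt_variance [IsProbabilityMeasure P] (hf : MemLp f 2 P) :
    ∫ ω, |f ω - ∫ x, f x ∂P| ∂P ≤ √(variance f P) := by
  have hg : MemLp (fun ω => |f ω - ∫ x, f x ∂P|) 2 P := (hf.sub (memLp_const _)).abs
  have hvar := variance_nonneg (fun ω => |f ω - ∫ x, f x ∂P|) P
  rw [variance_eq_sub hg] at hvar
  refine Real.le_sqrt_of_sq_le ?_
  rw [variance_eq_integral hf.aemeasurable]
  simpa only [Pi.pow_apply, sq_abs, sub_nonneg] using hvar

end BoundedFunctions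

/-- The density of the standard normal law. -/
abbrev stdGaussPDF : ℝ → ℝ := gaussianPDFReal 0 1

section GaussianTail

theorem stdGaussPDF_eq (x : ℝ) :
    stdGaussPDF x = (√(2 * Real.pi))⁻¹ * Real.exp (-(1 / 2) * x ^ 2) := by
  simp only [gaussianPDFReal, NNReal.coe_one, mul_one, sub_zero]
  ring_nf

theorem stdGaussPDF_pos (x : ℝ) : 0 < stdGaussPDF x :=
  gaussianPDFReal_pos 0 1 x one_ne_zero

theorem stdGaussPDF_neg (x : ℝ) : stdGaussPDF (-x) = stdGaussPDF x := by
  simp [gaussianPDFReal]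

theorem integrable_stdGaussPDF : Integrable stdGaussPDF :=
  integrable_gaussianPDFReal 0 1

theorem stdGaussPDF_le (x : ℝ) : stdGaussPDF x ≤ 0.4 := by
  have hexp : Real.exp (-(1 / 2) * x ^ 2) ≤ 1 :=
    Real.exp_le_one_iff.mpr (by nlinarith [sq_nonneg x])
  have hsqrt : (√(2 * Real.pi))⁻¹ ≤ 0.4 := by
    rw [inv_le_comm₀ (by positivity) (by norm_num)]
    refine Real.le_sqrt_of_sq_le ?_
    linarith [Real.pi_gt_d2]
  rw [stdGaussPDF_eq]
  calc _ ≤ (√(2 * Real.pi))⁻¹ * 1 := by gcongr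
    _ ≤ 0.4 := by rwa [mul_one]

theorem hasDerivAt_stdGaussPDF (x : ℝ) : HasDerivAt stdGaussPDF (-(x * stdGaussPDF x)) x := by
  have hexp := ((hasDerivAt_pow 2 x).const_mul (-(1 / 2) : ℝ)).exp.const_mul (√(2 * Real.pi))⁻¹
  rw [stdGaussPDF_eq, funext stdGaussPDF_eq]
  refine hexp.congr_deriv ?_
  simp only [Nat.cast_ofNat, Nat.add_one_sub_one, pow_one]
  ring

theorem continuous_stdGaussPDF : Continuous stdGaussPDF :=
  continuous_iff_continuousAt.mpr fun x => (hasDerivAt_stdGaussPDF x).continuousAt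

theorem tendsto_stdGaussPDF_atTop : Tendsto stdGaussPDF atTop (𝓝 0) := by
  rw [funext stdGaussPDF_eq, ← mul_zero (√(2 * Real.pi))⁻¹]
  refine (Real.tendsto_exp_atBot.comp ?_).const_mul _
  exact (tendsto_pow_atTop two_ne_zero).const_mul_atTop_of_neg (by norm_num)

theorem integrable_mul_stdGaussPDF : Integrable fun x => x * stdGaussPDF x := by
  refine ((integrable_mul_exp_neg_mul_sq (b := 1 / 2) (by norm_num)).const_mul
    (√(2 * Real.pi))⁻¹).congr (ae_of_all _ fun x => ?_)
  simp only [stdGaussPDF_eq]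
  ring

theorem gaussianReal_real_eq_setIntegral (s : Set ℝ) :
    (γ).real s = ∫ x in s, stdGaussPDF x := by
  rw [Measure.real, gaussianReal_apply_eq_integral 0 one_ne_zero, ENNReal.toReal_ofReal]
  exact integral_nonneg fun x => gaussianPDFReal_nonneg _ _ _

theorem setIntegral_gaussianReal {s : Set ℝ} (hs : MeasurableSet s) (f : ℝ → ℝ) :
    ∫ x in s, f x ∂γ = ∫ x in s, f x * stdGaussPDF x := by
  rw [← integral_indicator hs, integral_gaussianReal_eq_integral_smul one_ne_zero,
    ← integral_indicator hs]
  simp only [smul_eq_mul, indicator_apply, mul_ite, mul_zero, mul_comm (f _)]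

theorem integrable_gaussianReal_iff {f : ℝ → ℝ} :
    Integrable f γ ↔ Integrable fun x => f x * stdGaussPDF x := by
  rw [gaussianReal_of_var_ne_zero _ one_ne_zero, integrable_withDensity_iff_integrable_smul'
    (measurable_gaussianPDF 0 1) (ae_of_all _ fun _ => gaussianPDF_lt_top)]
  simp only [toReal_gaussianPDF, smul_eq_mul, mul_comm]

theorem gaussianReal_real_Iic (w : ℝ) : (γ).real (Iic w) = (γ).real (Ioi (-w)) := by
  rw [gaussianReal_real_eq_setIntegral, gaussianReal_real_eq_setIntegral, ← integral_comp_neg_Iic]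
  simp only [stdGaussPDF_neg]

theorem mul_gaussianReal_Ioi_le (w : ℝ) : w * (γ).real (Ioi w) ≤ stdGaussPDF w := by
  have htail : ∫ x in Ioi w, x * stdGaussPDF x = stdGaussPDF w := by
    rw [integral_Ioi_of_hasDerivAt_of_tendsto' (f := fun x => -stdGaussPDF x) (m := -0)
      (fun x _ => by simpa using (hasDerivAt_stdGaussPDF x).fun_neg)
      integrable_mul_stdGaussPDF.integrableOn tendsto_stdGaussPDF_atTop.neg]
    ring
  rw [gaussianReal_real_eq_setIntegral, ← htail, ← integral_const_mul]
  exact setIntegral_mono_on (integrable_stdGaussPDF.integrableOn.const_mul w)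
    integrable_mul_stdGaussPDF.integrableOn measurableSet_Ioi
    fun x hx => mul_le_mul_of_nonneg_right (le_of_lt hx) (stdGaussPDF_pos x).le

theorem integral_Ioi_exp_neg_half_sq_le :
    ∫ x in Ioi (0 : ℝ), Real.exp (-(1 / 2) * x ^ 2) ≤ 1.26 := by
  have hsqrt : √(Real.pi / (1 / 2)) ≤ 2.52 :=
    (Real.sqrt_le_left (by norm_num)).mpr (by linarith [Real.pi_lt_d2])
  rw [integral_gaussian_Ioi]
  linarith

theorem gaussianReal_Ioi_le {w : ℝ} (hw : 0 ≤ w) : (γ).real (Ioi w) ≤ 1.26 * stdGaussPDF w := by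
  have hshift : ∫ x in Ioi w, Real.exp (-(1 / 2) * (x - w) ^ 2) =
      ∫ x in Ioi (0 : ℝ), Real.exp (-(1 / 2) * x ^ 2) := by
    rw [← (measurePreserving_sub_right volume w).setIntegral_preimage_emb
      (MeasurableEquiv.subRight w).measurableEmbedding _ (Ioi 0)]
    simp
  have hexp : ∀ x ∈ Ioi w, stdGaussPDF x ≤ stdGaussPDF w * Real.exp (-(1 / 2) * (x - w) ^ 2) := by
    intro x hx
    rw [stdGaussPDF_eq, stdGaussPDF_eq, mul_assoc, ← Real.exp_add]
    gcongr
    nlinarith [mem_Ioi.mp hx]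
  have hint : Integrable fun x => Real.exp (-(1 / 2) * (x - w) ^ 2) :=
    (integrable_exp_neg_mul_sq (b := 1 / 2) (by norm_num)).comp_sub_right w
  calc (γ).real (Ioi w)
      ≤ ∫ x in Ioi w, stdGaussPDF w * Real.exp (-(1 / 2) * (x - w) ^ 2) := by
        rw [gaussianReal_real_eq_setIntegral]
        exact setIntegral_mono_on integrable_stdGaussPDF.integrableOn
          (hint.const_mul _).integrableOn measurableSet_Ioi hexp
    _ = (∫ x in Ioi (0 : ℝ), Real.exp (-(1 / 2) * x ^ 2)) * stdGaussPDF w := by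
        rw [integral_const_mul, hshift, mul_comm]
    _ ≤ 1.26 * stdGaussPDF w := by
        gcongr
        exacts [(stdGaussPDF_pos w).le, integral_Ioi_exp_neg_half_sq_le]

theorem stdGaussCDF_sub_le {a b : ℝ} (hab : a ≤ b) :
    stdGaussCDF b - stdGaussCDF a ≤ 0.4 * (b - a) := by
  have hcdf (t : ℝ) : stdGaussCDF t = ∫ x in Iic t, stdGaussPDF x :=
    gaussianReal_real_eq_setIntegral _
  have hmono := intervalIntegral.integral_mono_on (μ := volume) hab
    integrable_stdGaussPDF.intervalIntegrable
    (intervalIntegrable_const (c := (0.4 : ℝ))) (fun x _ => stdGaussPDF_le x)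
  rw [hcdf, hcdf, intervalIntegral.integral_Iic_sub_Iic integrable_stdGaussPDF.integrableOn
    integrable_stdGaussPDF.integrableOn]
  simpa [mul_comm] using hmono

end GaussianTail

section SteinEquation

/-- The numerator `∫_{(-∞, w]} (h - γ h) dγ` of the solution of Stein's equation, where `γ` is the
standard normal law. -/
def steinNumerator (h : ℝ → ℝ) (w : ℝ) : ℝ :=
  ∫ x in Iic w, (h x - ∫ y, h y ∂γ) ∂γ

/-- The bounded solution `f` of Stein's equation `f' w - w * f w = h w - γ h`. -/
def steinSolution (h : ℝ → ℝ) (w : ℝ) : ℝ :=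
  steinNumerator h w / stdGaussPDF w

variable {h : ℝ → ℝ}

theorem steinNumerator_eq_integral_Ioi (hint : Integrable h γ) (w : ℝ) :
    steinNumerator h w = ∫ x in Ioi w, ((∫ y, h y ∂γ) - h x) ∂γ := by
  have hcentred : Integrable (fun x => h x - ∫ y, h y ∂γ) γ := hint.sub (integrable_const _)
  have htotal : ∫ x, (h x - ∫ y, h y ∂γ) ∂γ = 0 := by
    simp [integral_sub hint (integrable_const _)]
  have hsplit := intervalIntegral.integral_Iic_add_Ioi (b := w)
    hcentred.integrableOn hcentred.integrableOn
  have hneg : ∫ x in Ioi w, ((∫ y, h y ∂γ) - h x) ∂γ =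
      -∫ x in Ioi w, (h x - ∫ y, h y ∂γ) ∂γ := by
    rw [← integral_neg]
    simp only [neg_sub]
  rw [steinNumerator, hneg]
  linarith

theorem steinNumerator_nonneg (hanti : Antitone h) (hint : Integrable h γ) (w : ℝ) :
    0 ≤ steinNumerator h w := by
  rcases le_total (∫ y, h y ∂γ) (h w) with hw | hw
  · exact setIntegral_nonneg measurableSet_Iic fun x hx => sub_nonneg.mpr (hw.trans (hanti hx))
  · rw [steinNumerator_eq_integral_Ioi hint]
    exact setIntegral_nonneg measurableSet_Ioi fun x hx =>
      sub_nonneg.mpr ((hanti (le_of_lt hx)).trans hw)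

theorem steinNumerator_le_mul_Ioi (hnonneg : ∀ x, 0 ≤ h x) (hint : Integrable h γ) (w : ℝ) :
    steinNumerator h w ≤ (∫ y, h y ∂γ) * (γ).real (Ioi w) := by
  rw [steinNumerator_eq_integral_Ioi hint, mul_comm, ← smul_eq_mul, ← setIntegral_const]
  exact setIntegral_mono_on ((integrable_const _).sub hint).integrableOn
    (integrable_const _).integrableOn measurableSet_Ioi fun x _ => sub_le_self _ (hnonneg x)

theorem steinNumerator_le_mul_Iic (hle : ∀ x, h x ≤ 1) (hint : Integrable h γ) (w : ℝ) :
    steinNumerator h w ≤ (1 - ∫ y, h y ∂γ) * (γ).real (Ioi (-w)) := by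
  rw [← gaussianReal_real_Iic, mul_comm, ← smul_eq_mul, ← setIntegral_const]
  exact setIntegral_mono_on (hint.sub (integrable_const _)).integrableOn
    (integrable_const _).integrableOn measurableSet_Iic fun x _ => sub_le_sub_right (hle x) _

theorem hasDerivAt_steinNumerator (hcont : Continuous h) (hint : Integrable h γ) (w : ℝ) :
    HasDerivAt (steinNumerator h) ((h w - ∫ y, h y ∂γ) * stdGaussPDF w) w := by
  set k : ℝ → ℝ := fun x => (h x - ∫ y, h y ∂γ) * stdGaussPDF x
  have hk_cont : Continuous k := (hcont.sub continuous_const).mul continuous_stdGaussPDF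
  have hk : Integrable k := integrable_gaussianReal_iff.mp (hint.sub (integrable_const _))
  have hprimitive : steinNumerator h = fun u => (∫ x in (0 : ℝ)..u, k x) + ∫ x in Iic 0, k x := by
    ext u
    rw [steinNumerator, setIntegral_gaussianReal measurableSet_Iic,
      ← intervalIntegral.integral_Iic_sub_Iic hk.integrableOn hk.integrableOn, sub_add_cancel]
  rw [hprimitive]
  exact (intervalIntegral.integral_hasDerivAt_right hk.intervalIntegrable
    (hk_cont.stronglyMeasurableAtFilter _ _) hk_cont.continuousAt).add_const _

theorem hasDerivAt_steinSolution (hcont : Continuous h) (hint : Integrable h γ) (w : ℝ) :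
    HasDerivAt (steinSolution h) (w * steinSolution h w + h w - ∫ y, h y ∂γ) w := by
  have hpdf := (stdGaussPDF_pos w).ne'
  refine ((hasDerivAt_steinNumerator hcont hint w).div (hasDerivAt_stdGaussPDF w) hpdf).congr_deriv
    ?_
  rw [steinSolution]
  field_simp
  ring

theorem steinSolution_nonneg (hanti : Antitone h) (hint : Integrable h γ) (w : ℝ) :
    0 ≤ steinSolution h w :=
  div_nonneg (steinNumerator_nonneg hanti hint w) (stdGaussPDF_pos w).le

variable (h01 : ∀ x, h x ∈ Icc (0 : ℝ) 1)
include h01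

theorem integral_mem_Icc_zero_one (hint : Integrable h γ) : ∫ y, h y ∂γ ∈ Icc (0 : ℝ) 1 := by
  refine ⟨integral_nonneg fun x => (h01 x).1, ?_⟩
  simpa using integral_mono hint (integrable_const (1 : ℝ)) fun x => (h01 x).2

theorem steinSolution_le (hint : Integrable h γ) (w : ℝ) : steinSolution h w ≤ 1.26 := by
  obtain ⟨hm0, hm1⟩ := integral_mem_Icc_zero_one h01 hint
  rw [steinSolution, div_le_iff₀ (stdGaussPDF_pos w)]
  rcases le_total 0 w with hw | hw
  · calc steinNumerator h w ≤ (∫ y, h y ∂γ) * (γ).real (Ioi w) :=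
          steinNumerator_le_mul_Ioi (fun x => (h01 x).1) hint w
      _ ≤ 1 * (1.26 * stdGaussPDF w) := by gcongr; exact gaussianReal_Ioi_le hw
      _ = 1.26 * stdGaussPDF w := one_mul _
  · calc steinNumerator h w ≤ (1 - ∫ y, h y ∂γ) * (γ).real (Ioi (-w)) :=
          steinNumerator_le_mul_Iic (fun x => (h01 x).2) hint w
      _ ≤ 1 * (1.26 * stdGaussPDF (-w)) := by
          gcongr
          exacts [by linarith, gaussianReal_Ioi_le (neg_nonneg.mpr hw)]
      _ = 1.26 * stdGaussPDF w := by rw [one_mul, stdGaussPDF_neg]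

theorem mul_steinSolution_le (hint : Integrable h γ) {w : ℝ} (hw : 0 ≤ w) :
    w * steinSolution h w ≤ ∫ y, h y ∂γ := by
  rw [steinSolution, ← mul_div_assoc, div_le_iff₀ (stdGaussPDF_pos w)]
  calc w * steinNumerator h w ≤ w * ((∫ y, h y ∂γ) * (γ).real (Ioi w)) := by
        gcongr
        exact steinNumerator_le_mul_Ioi (fun x => (h01 x).1) hint w
    _ = (∫ y, h y ∂γ) * (w * (γ).real (Ioi w)) := by ring
    _ ≤ (∫ y, h y ∂γ) * stdGaussPDF w := by
        gcongr
        exacts [(integral_mem_Icc_zero_one h01 hint).1, mul_gaussianReal_Ioi_le w]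

theorem neg_mul_steinSolution_le (hint : Integrable h γ) {w : ℝ} (hw : w ≤ 0) :
    -w * steinSolution h w ≤ 1 - ∫ y, h y ∂γ := by
  rw [steinSolution, ← mul_div_assoc, div_le_iff₀ (stdGaussPDF_pos w)]
  calc -w * steinNumerator h w ≤ -w * ((1 - ∫ y, h y ∂γ) * (γ).real (Ioi (-w))) := by
        gcongr
        exacts [neg_nonneg.mpr hw, steinNumerator_le_mul_Iic (fun x => (h01 x).2) hint w]
    _ = (1 - ∫ y, h y ∂γ) * (-w * (γ).real (Ioi (-w))) := by ring
    _ ≤ (1 - ∫ y, h y ∂γ) * stdGaussPDF (-w) := by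
        gcongr
        exacts [sub_nonneg.mpr (integral_mem_Icc_zero_one h01 hint).2, mul_gaussianReal_Ioi_le _]
    _ = (1 - ∫ y, h y ∂γ) * stdGaussPDF w := by rw [stdGaussPDF_neg]

theorem abs_deriv_steinSolution_le (hanti : Antitone h) (hint : Integrable h γ) (w : ℝ) :
    |w * steinSolution h w + h w - ∫ y, h y ∂γ| ≤ 1 := by
  have hf := steinSolution_nonneg hanti hint w
  obtain ⟨hm0, hm1⟩ := integral_mem_Icc_zero_one h01 hint
  obtain ⟨hw0, hw1⟩ := h01 w
  rw [abs_le]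
  rcases le_total 0 w with hw | hw
  · have hle := mul_steinSolution_le h01 hint hw
    have hnonneg := mul_nonneg hw hf
    constructor <;> linarith
  · have hle := neg_mul_steinSolution_le h01 hint hw
    have hnonpos := mul_nonpos_of_nonpos_of_nonneg hw hf
    constructor <;> linarith

theorem abs_steinSolution_sub_le (hcont : Continuous h) (hanti : Antitone h)
    (hint : Integrable h γ) (x y : ℝ) :
    |steinSolution h y - steinSolution h x| ≤ |y - x| := by
  simpa using Convex.norm_image_sub_le_of_norm_hasDerivWithin_le (C := 1)
    (fun w _ => (hasDerivAt_steinSolution hcont hint w).hasDerivWithinAt)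
    (fun w _ => abs_deriv_steinSolution_le h01 hanti hint w) convex_univ (mem_univ x) (mem_univ y)

end SteinEquation

section Ramp

/-- The piecewise linear smoothing of the indicator of `(-∞, z]` with slope `-1 / α` on
`[z, z + α]`. -/
def ramp (z α x : ℝ) : ℝ := max 0 (min 1 ((z + α - x) / α))

theorem continuous_ramp (z α : ℝ) : Continuous (ramp z α) := by
  unfold ramp
  fun_prop

theorem ramp_mem_Icc (z α x : ℝ) : ramp z α x ∈ Icc (0 : ℝ) 1 :=
  ⟨le_max_left _ _, max_le zero_le_one (min_le_left _ _)⟩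

theorem abs_ramp_le_one (z α x : ℝ) : |ramp z α x| ≤ 1 :=
  (abs_of_nonneg (ramp_mem_Icc z α x).1).trans_le (ramp_mem_Icc z α x).2

variable {z α : ℝ} (hα : 0 < α)
include hα

theorem antitone_ramp : Antitone (ramp z α) := by
  intro x y hxy
  unfold ramp
  gcongr

theorem ramp_eq_one {x : ℝ} (hx : x ≤ z) : ramp z α x = 1 := by
  have hone : 1 ≤ (z + α - x) / α := by rw [le_div_iff₀ hα]; linarith
  rw [ramp, min_eq_left hone, max_eq_right zero_le_one]

theorem ramp_eq_zero {x : ℝ} (hx : z + α ≤ x) : ramp z α x = 0 :=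
  max_eq_left ((min_le_right _ _).trans (div_nonpos_of_nonpos_of_nonneg (by linarith) hα.le))

theorem abs_ramp_sub_le (x y : ℝ) : |ramp z α x - ramp z α y| ≤ |x - y| / α := by
  have hmax := abs_max_sub_max_le_abs (min 1 ((z + α - x) / α)) (min 1 ((z + α - y) / α)) 0
  have hmin := abs_min_sub_min_le_max 1 ((z + α - x) / α) 1 ((z + α - y) / α)
  rw [sub_self, abs_zero, max_eq_right (abs_nonneg _)] at hmin
  calc |ramp z α x - ramp z α y| ≤ |(z + α - x) / α - (z + α - y) / α| := by
        simpa only [ramp, max_comm (0 : ℝ)] using hmax.trans hmin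
    _ = |x - y| / α := by
        rw [← sub_div, abs_div, abs_of_pos hα, sub_sub_sub_cancel_left, abs_sub_comm]

theorem abs_ramp_add_sub_le {A w s : ℝ} (hs : |s| ≤ A) :
    |ramp z α (w + s) - ramp z α w| ≤
      (Ioc (z - A) (z + α + A)).indicator 1 w / α * |s| := by
  obtain ⟨hs_lower, hs_upper⟩ := abs_le.mp hs
  by_cases hw : w ∈ Ioc (z - A) (z + α + A)
  · have hlip := abs_ramp_sub_le (z := z) hα (w + s) w
    rw [add_sub_cancel_left] at hlip
    rwa [indicator_of_mem hw, Pi.one_apply, one_div, inv_mul_eq_div]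
  · rw [indicator_of_notMem hw, zero_div, zero_mul, abs_nonpos_iff, sub_eq_zero]
    rw [mem_Ioc, not_and_or, not_lt, not_le] at hw
    rcases hw with hw | hw
    · rw [ramp_eq_one hα (by linarith), ramp_eq_one hα (by linarith)]
    · rw [ramp_eq_zero hα (by linarith), ramp_eq_zero hα (by linarith)]

variable {Ω : Type*} [MeasurableSpace Ω] {P : Measure Ω} [IsProbabilityMeasure P] {W : Ω → ℝ}
  (hW : Measurable W)
include hW

theorem measureReal_le_integral_ramp : P.real {ω | W ω ≤ z} ≤ ∫ ω, ramp z α (W ω) ∂P := by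
  have hm : MeasurableSet {ω | W ω ≤ z} := measurableSet_le hW measurable_const
  rw [← integral_indicator_one hm]
  refine integral_mono ((integrable_const (1 : ℝ)).indicator hm) (integrable_of_abs_le
    ((continuous_ramp z α).measurable.comp hW) fun ω => abs_ramp_le_one z α (W ω)) fun ω => ?_
  by_cases hω : W ω ≤ z
  · simp [indicator, hω, ramp_eq_one hα hω]
  · simp [indicator, hω, (ramp_mem_Icc z α (W ω)).1]

theorem integral_ramp_le_measureReal : ∫ ω, ramp z α (W ω) ∂P ≤ P.real {ω | W ω ≤ z + α} := by
  have hm : MeasurableSet {ω | W ω ≤ z + α} := measurableSet_le hW measurable_const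
  rw [← integral_indicator_one hm]
  refine integral_mono (integrable_of_abs_le ((continuous_ramp z α).measurable.comp hW)
    fun ω => abs_ramp_le_one z α (W ω)) ((integrable_const (1 : ℝ)).indicator hm) fun ω => ?_
  by_cases hω : W ω ≤ z + α
  · simp [indicator, hω, (ramp_mem_Icc z α (W ω)).2]
  · simp [indicator, hω, ramp_eq_zero hα (le_of_not_ge hω)]

end Ramp

theorem abs_sub_sub_mul_deriv_le {f f' : ℝ → ℝ} (hf : ∀ x, HasDerivAt f (f' x) x) {w t K : ℝ}
    (hK : ∀ s, |s| ≤ |t| → |f' (w + s) - f' w| ≤ K * |s|) :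
    |f (w + t) - f w - t * f' w| ≤ K * t ^ 2 / 2 := by
  have hremainder (r : ℝ) : HasDerivAt (fun r : ℝ => f (w + r * t) - f w - r * t * f' w)
      (t * (f' (w + r * t) - f' w)) r := by
    have hline : HasDerivAt (fun r : ℝ => w + r * t) t r := by
      simpa using ((hasDerivAt_id r).mul_const t).const_add w
    have hlinear : HasDerivAt (fun r : ℝ => r * t * f' w) (t * f' w) r := by
      simpa using ((hasDerivAt_id r).mul_const t).mul_const (f' w)
    refine ((((hf (w + r * t)).comp r hline).sub_const (f w)).sub hlinear).congr_deriv ?_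
    ring
  have hquadratic (r : ℝ) :
      HasDerivAt (fun r : ℝ => K * t ^ 2 / 2 * r ^ 2) (K * t ^ 2 * r) r := by
    refine ((hasDerivAt_pow 2 r).const_mul (K * t ^ 2 / 2)).congr_deriv ?_
    simp only [Nat.cast_ofNat, Nat.add_one_sub_one, pow_one]
    ring
  have hbound : ∀ r ∈ Ico (0 : ℝ) 1, ‖t * (f' (w + r * t) - f' w)‖ ≤ K * t ^ 2 * r := by
    rintro r ⟨hr0, hr1⟩
    have habs : |r * t| = r * |t| := by rw [abs_mul, abs_of_nonneg hr0]
    calc ‖t * (f' (w + r * t) - f' w)‖ = |t| * |f' (w + r * t) - f' w| := abs_mul _ _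
      _ ≤ |t| * (K * |r * t|) := by
          gcongr
          refine hK _ ?_
          rw [habs]
          exact mul_le_of_le_one_left (abs_nonneg t) hr1.le
      _ = K * t ^ 2 * r := by rw [habs, ← sq_abs t]; ring
  simpa using image_norm_le_of_norm_deriv_right_le_deriv_boundary
    (fun r _ => (hremainder r).continuousAt.continuousWithinAt)
    (fun r _ => (hremainder r).hasDerivWithinAt) (by simp) hquadratic hbound
    (right_mem_Icc.mpr zero_le_one)

section SmoothedDistance

/-- Bound for the first-order Taylor remainder, over increments of size at most `A`, of the
solution of Stein's equation for `ramp z α`. -/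
def steinRemainder (A z α w : ℝ) : ℝ :=
  A ^ 2 / 2 * (|w| + 1.26) + A ^ 2 / (2 * α) * (Ioc (z - A) (z + α + A)).indicator 1 w

variable {A z α : ℝ} (hα : 0 < α)

theorem measurable_steinRemainder : Measurable (steinRemainder A z α) := by
  have hind : Measurable ((Ioc (z - A) (z + α + A)).indicator (1 : ℝ → ℝ)) :=
    measurable_one.indicator measurableSet_Ioc
  unfold steinRemainder
  fun_prop

theorem integrable_ramp_gaussianReal (z α : ℝ) : Integrable (ramp z α) γ :=
  integrable_of_abs_le (continuous_ramp z α).measurable (abs_ramp_le_one z α)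

include hα

theorem abs_deriv_steinSolution_ramp_sub_le (w : ℝ) {s : ℝ} (hs : |s| ≤ A) :
    |((w + s) * steinSolution (ramp z α) (w + s) + ramp z α (w + s) - ∫ x, ramp z α x ∂γ) -
        (w * steinSolution (ramp z α) w + ramp z α w - ∫ x, ramp z α x ∂γ)| ≤
      (|w| + 1.26 + (Ioc (z - A) (z + α + A)).indicator 1 w / α) * |s| := by
  set f := steinSolution (ramp z α)
  have hint := integrable_ramp_gaussianReal z α
  have hf : |f (w + s)| ≤ 1.26 := by
    rw [abs_of_nonneg (steinSolution_nonneg (antitone_ramp hα) hint _)]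
    exact steinSolution_le (ramp_mem_Icc z α) hint _
  have hincrement : |f (w + s) - f w| ≤ |s| := by
    simpa using abs_steinSolution_sub_le (ramp_mem_Icc z α) (continuous_ramp z α)
      (antitone_ramp hα) hint w (w + s)
  calc _ = |w * (f (w + s) - f w) + s * f (w + s) + (ramp z α (w + s) - ramp z α w)| := by
        congr 1
        ring
    _ ≤ |w| * |f (w + s) - f w| + |s| * |f (w + s)| + |ramp z α (w + s) - ramp z α w| := by
        rw [← abs_mul, ← abs_mul]
        exact abs_add_three _ _ _
    _ ≤ |w| * |s| + |s| * 1.26 + (Ioc (z - A) (z + α + A)).indicator 1 w / α * |s| := by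
        gcongr
        exact abs_ramp_add_sub_le hα hs
    _ = _ := by ring

theorem abs_steinSolution_ramp_taylor_le (w : ℝ) {t : ℝ} (ht : |t| ≤ A) :
    |steinSolution (ramp z α) (w + t) - steinSolution (ramp z α) w -
        t * (w * steinSolution (ramp z α) w + ramp z α w - ∫ x, ramp z α x ∂γ)| ≤
      steinRemainder A z α w := by
  have hkink : 0 ≤ (Ioc (z - A) (z + α + A)).indicator (1 : ℝ → ℝ) w :=
    indicator_nonneg (fun _ _ => zero_le_one) _
  calc _ ≤ (|w| + 1.26 + (Ioc (z - A) (z + α + A)).indicator 1 w / α) * t ^ 2 / 2 :=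
        abs_sub_sub_mul_deriv_le
          (hasDerivAt_steinSolution (continuous_ramp z α) (integrable_ramp_gaussianReal z α))
          fun s hs => abs_deriv_steinSolution_ramp_sub_le hα w (hs.trans ht)
    _ ≤ (|w| + 1.26 + (Ioc (z - A) (z + α + A)).indicator 1 w / α) * A ^ 2 / 2 := by
        gcongr ?_ * ?_ / 2
        rw [← sq_abs t]
        gcongr
    _ = steinRemainder A z α w := by rw [steinRemainder]; field_simp

end SmoothedDistance

section KolmogorovBound

variable {Ω : Type*} [MeasurableSpace Ω] {P : Measure Ω} {W : Ω → ℝ} {A q κ δ : ℝ}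

/-- The random variable `W` satisfies Stein's identity `E f'(W) = E W f(W)` up to an error `q` plus
`κ` times the mean of any bound `g(W)` for the Taylor remainder of `f` over increments of size at
most `A`. -/
def ApproxSteinIdentity (P : Measure Ω) (W : Ω → ℝ) (A q κ : ℝ) : Prop :=
  ∀ f f' g : ℝ → ℝ, (∀ x, HasDerivAt f (f' x) x) → Continuous f' → (∀ x, |f' x| ≤ 1) →
    Measurable g → Integrable (fun ω => g (W ω)) P →
    (∀ w t, |t| ≤ A → |f (w + t) - f w - t * f' w| ≤ g w) →
    |∫ ω, (f' (W ω) - W ω * f (W ω)) ∂P| ≤ q + κ * ∫ ω, g (W ω) ∂P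

variable [IsProbabilityMeasure P]

theorem abs_cdf_sub_le_one (t : ℝ) : |P.real {ω | W ω ≤ t} - stdGaussCDF t| ≤ 1 :=
  abs_sub_le_of_nonneg_of_le measureReal_nonneg measureReal_le_one measureReal_nonneg
    measureReal_le_one

variable (hW : Measurable W)
include hW

theorem measureReal_Ioc_le (hδ : ∀ t, |P.real {ω | W ω ≤ t} - stdGaussCDF t| ≤ δ) {a b : ℝ}
    (hab : a ≤ b) : P.real {ω | W ω ∈ Ioc a b} ≤ 0.4 * (b - a) + 2 * δ := by
  have hsdiff : {ω | W ω ∈ Ioc a b} = {ω | W ω ≤ b} \ {ω | W ω ≤ a} := by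
    ext ω
    simp [and_comm]
  have hsubset : {ω | W ω ≤ a} ⊆ {ω | W ω ≤ b} := fun ω hω => le_trans hω hab
  rw [hsdiff, measureReal_sdiff hsubset (measurableSet_le hW measurable_const)]
  linarith [(abs_le.mp (hδ b)).2, (abs_le.mp (hδ a)).1, stdGaussCDF_sub_le hab]

theorem integrable_indicator_Ioc (a b : ℝ) :
    Integrable (fun ω => (Ioc a b).indicator (1 : ℝ → ℝ) (W ω)) P :=
  (integrable_const (1 : ℝ)).indicator (hW measurableSet_Ioc)

theorem integrable_steinRemainder (hint : Integrable W P) (z α : ℝ) :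
    Integrable (fun ω => steinRemainder A z α (W ω)) P :=
  ((hint.abs.add (integrable_const _)).const_mul _).add
    ((integrable_indicator_Ioc hW _ _).const_mul _)

theorem integral_steinRemainder_le (hint : Integrable W P) (hW1 : ∫ ω, |W ω| ∂P ≤ 1)
    (hδ : ∀ t, |P.real {ω | W ω ≤ t} - stdGaussCDF t| ≤ δ) (hA : 0 ≤ A) (z : ℝ) {α : ℝ}
    (hα : 0 < α) :
    ∫ ω, steinRemainder A z α (W ω) ∂P ≤
      A ^ 2 * (1.13 + (0.4 * (α + 2 * A) + 2 * δ) / (2 * α)) := by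
  have hkink : ∫ ω, (Ioc (z - A) (z + α + A)).indicator (1 : ℝ → ℝ) (W ω) ∂P ≤
      0.4 * (α + 2 * A) + 2 * δ := by
    calc _ = P.real {ω | W ω ∈ Ioc (z - A) (z + α + A)} :=
          integral_indicator_one (hW measurableSet_Ioc)
      _ ≤ 0.4 * (z + α + A - (z - A)) + 2 * δ := measureReal_Ioc_le hW hδ (by linarith)
      _ = _ := by ring
  calc _ = A ^ 2 / 2 * (∫ ω, |W ω| ∂P + 1.26) + A ^ 2 / (2 * α) *
          ∫ ω, (Ioc (z - A) (z + α + A)).indicator (1 : ℝ → ℝ) (W ω) ∂P := by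
        simp only [steinRemainder]
        have hmoment : Integrable (fun ω => |W ω| + 1.26) P := hint.abs.add (integrable_const _)
        rw [integral_add (hmoment.const_mul _) ((integrable_indicator_Ioc hW _ _).const_mul _),
          integral_const_mul, integral_const_mul, integral_add hint.abs (integrable_const _),
          integral_const, probReal_univ, one_smul]
    _ ≤ A ^ 2 / 2 * (1 + 1.26) + A ^ 2 / (2 * α) * (0.4 * (α + 2 * A) + 2 * δ) := by gcongr
    _ = _ := by field_simp; ring

theorem abs_integral_ramp_sub_le (hint : Integrable W P) (hW1 : ∫ ω, |W ω| ∂P ≤ 1) (hA : 0 ≤ A)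
    (hκ : 0 ≤ κ) (hstein : ApproxSteinIdentity P W A q κ)
    (hδ : ∀ t, |P.real {ω | W ω ≤ t} - stdGaussCDF t| ≤ δ) (z : ℝ) {α : ℝ} (hα : 0 < α) :
    |∫ ω, ramp z α (W ω) ∂P - ∫ x, ramp z α x ∂γ| ≤
      q + κ * A ^ 2 * (1.13 + (0.4 * (α + 2 * A) + 2 * δ) / (2 * α)) := by
  set f := steinSolution (ramp z α)
  set m := ∫ x, ramp z α x ∂γ
  have hramp := integrable_ramp_gaussianReal z α
  have hf := hasDerivAt_steinSolution (continuous_ramp z α) hramp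
  have hf_cont : Continuous f := continuous_iff_continuousAt.mpr fun x => (hf x).continuousAt
  have hidentity : ∫ ω, (W ω * f (W ω) + ramp z α (W ω) - m - W ω * f (W ω)) ∂P =
      ∫ ω, ramp z α (W ω) ∂P - m := by
    have hrampW : Integrable (fun ω => ramp z α (W ω)) P := integrable_of_abs_le
      ((continuous_ramp z α).measurable.comp hW) fun ω => abs_ramp_le_one z α (W ω)
    have hcancel (ω : Ω) : W ω * f (W ω) + ramp z α (W ω) - m - W ω * f (W ω) =
        ramp z α (W ω) - m := by ring
    simp only [hcancel]
    rw [integral_sub hrampW (integrable_const _), integral_const, probReal_univ, one_smul]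
  rw [← hidentity]
  calc _ ≤ q + κ * ∫ ω, steinRemainder A z α (W ω) ∂P :=
        hstein f (fun w => w * f w + ramp z α w - m) _ hf
          (((continuous_id.mul hf_cont).add (continuous_ramp z α)).sub continuous_const)
          (abs_deriv_steinSolution_le (ramp_mem_Icc z α) (antitone_ramp hα) hramp)
          measurable_steinRemainder (integrable_steinRemainder hW hint z α)
          fun w t ht => abs_steinSolution_ramp_taylor_le hα w ht
    _ ≤ q + κ * (A ^ 2 * (1.13 + (0.4 * (α + 2 * A) + 2 * δ) / (2 * α))) := by
        gcongr
        exact integral_steinRemainder_le hW hint hW1 hδ hA z hα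
    _ = _ := by ring

theorem abs_cdf_sub_le_of_forall_ramp {α ε : ℝ} (hα : 0 < α)
    (hramp : ∀ z, |∫ ω, ramp z α (W ω) ∂P - ∫ x, ramp z α x ∂γ| ≤ ε) (t : ℝ) :
    |P.real {ω | W ω ≤ t} - stdGaussCDF t| ≤ 0.4 * α + ε := by
  have hupper : P.real {ω | W ω ≤ t} ≤ stdGaussCDF (t + α) + ε := by
    have hright : ∫ x, ramp t α x ∂γ ≤ stdGaussCDF (t + α) :=
      integral_ramp_le_measureReal (P := γ) hα measurable_id
    linarith [measureReal_le_integral_ramp (P := P) (z := t) hα hW, (abs_le.mp (hramp t)).2]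
  have hlower : stdGaussCDF (t - α) - ε ≤ P.real {ω | W ω ≤ t} := by
    have hright := integral_ramp_le_measureReal (P := P) (z := t - α) hα hW
    have hleft : stdGaussCDF (t - α) ≤ ∫ x, ramp (t - α) α x ∂γ :=
      measureReal_le_integral_ramp (P := γ) hα measurable_id
    rw [sub_add_cancel] at hright
    linarith [(abs_le.mp (hramp (t - α))).1]
  have hcdf_right := stdGaussCDF_sub_le (le_add_of_nonneg_right hα.le : t ≤ t + α)
  have hcdf_left := stdGaussCDF_sub_le (sub_le_self t hα.le)
  rw [abs_le]
  constructor <;> linarith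

end KolmogorovBound

-- The choice `α = p + √p * √(11 p + 5 q)` makes the coefficient of `δ` on the right less than one.
theorem le_of_forall_smoothing_le {p q A δ : ℝ} (hp : 0 < p) (hq : 0 ≤ q) (hAp : A ≤ p)
    (h : ∀ α > 0, δ ≤ 0.4 * α + (q + p * (1.13 + (0.4 * (α + 2 * A) + 2 * δ) / (2 * α)))) :
    δ ≤ (1 / 5) * (√(11 * p + 5 * q) + 2 * √p) ^ 2 := by
  set R := √(11 * p + 5 * q)
  set r := √p
  have hR : R ^ 2 = 11 * p + 5 * q := Real.sq_sqrt (by positivity)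
  have hr : r ^ 2 = p := Real.sq_sqrt hp.le
  have hs : 0 < r * R := mul_pos (Real.sqrt_pos.mpr hp) (Real.sqrt_pos.mpr (by positivity))
  set s := r * R with hs_def
  have hs_sq : s ^ 2 = p * (11 * p + 5 * q) := by rw [hs_def, mul_pow, hr, hR]
  have hsolved : δ * s ≤ 0.4 * (p + s) ^ 2 + (q + 1.33 * p) * (p + s) + 0.4 * p * p := by
    have hoptimal := h (p + s) (by positivity)
    have hcommon :
        0.4 * (p + s) + (q + p * (1.13 + (0.4 * (p + s + 2 * A) + 2 * δ) / (2 * (p + s)))) =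
          (0.4 * (p + s) ^ 2 + (q + 1.33 * p) * (p + s) + 0.4 * p * A + p * δ) / (p + s) := by
      field_simp
      ring
    rw [hcommon, le_div_iff₀ (by positivity)] at hoptimal
    nlinarith
  have hbound : 0.4 * (p + s) ^ 2 + (q + 1.33 * p) * (p + s) + 0.4 * p * p ≤
      (1 / 5) * (R + 2 * r) ^ 2 * s := by
    have hexpand : (1 / 5) * (R + 2 * r) ^ 2 * s =
        1 / 5 * R ^ 2 * s + 4 / 5 * s ^ 2 + 4 / 5 * r ^ 2 * s := by
      rw [hs_def]
      ring
    rw [hexpand, hR, hr]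
    nlinarith [mul_pos hp hs, mul_pos hp hp, mul_nonneg hp.le hq]
  exact le_of_mul_le_mul_right (hsolved.trans hbound) hs

theorem iSup_abs_cdf_sub_le {Ω : Type*} [MeasurableSpace Ω] {P : Measure Ω}
    [IsProbabilityMeasure P] {W : Ω → ℝ} {A q κ : ℝ} (hW : Measurable W) (hint : Integrable W P)
    (hW1 : ∫ ω, |W ω| ∂P ≤ 1) (hA : 0 < A) (hκ : 1 ≤ κ * A) (hq : 0 ≤ q)
    (hstein : ApproxSteinIdentity P W A q κ) :
    ⨆ t : ℝ, |P.real {ω | W ω ≤ t} - stdGaussCDF t| ≤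
      (1 / 5) * (√(11 * (κ * A ^ 2) + 5 * q) + 2 * √(κ * A ^ 2)) ^ 2 := by
  set δ := ⨆ t : ℝ, |P.real {ω | W ω ≤ t} - stdGaussCDF t|
  have hδ : ∀ t, |P.real {ω | W ω ≤ t} - stdGaussCDF t| ≤ δ :=
    le_ciSup ⟨1, forall_mem_range.mpr abs_cdf_sub_le_one⟩
  have hκ0 : 0 < κ := pos_of_mul_pos_left (zero_lt_one.trans_le hκ) hA.le
  have hAκ : A ≤ κ * A ^ 2 := by
    calc A = 1 * A := (one_mul A).symm
      _ ≤ κ * A * A := by gcongr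
      _ = κ * A ^ 2 := by ring
  refine le_of_forall_smoothing_le (by positivity) hq hAκ fun α hα => ciSup_le ?_
  exact abs_cdf_sub_le_of_forall_ramp hW hα fun z =>
    abs_integral_ramp_sub_le hW hint hW1 hA.le hκ0.le hstein hδ z hα

section ProductMeasure

theorem measurePreserving_update {ι : Type*} [Fintype ι] [DecidableEq ι] {X : ι → Type*}
    [∀ i, MeasurableSpace (X i)] (μ : ∀ i, Measure (X i)) [∀ i, IsProbabilityMeasure (μ i)]
    (i : ι) :
    MeasurePreserving (fun p : (∀ j, X j) × X i => Function.update p.1 i p.2)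
      ((Measure.pi μ).prod (μ i)) (Measure.pi μ) := by
  refine ⟨measurable_update', (Measure.pi_eq fun s hs => ?_).symm⟩
  have hpreimage : (fun p : (∀ j, X j) × X i => Function.update p.1 i p.2) ⁻¹' univ.pi s =
      univ.pi (Function.update s i univ) ×ˢ s i := by
    ext ⟨U, y⟩
    simp only [mem_preimage, mem_univ_pi, mem_prod,
      Function.forall_update_iff U (fun j x => x ∈ s j),
      Function.forall_update_iff s (fun j t => U j ∈ t), mem_univ, true_and]
    exact and_comm
  rw [Measure.map_apply measurable_update' (.univ_pi hs), hpreimage, Measure.prod_prod,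
    Measure.pi_pi, ← Finset.mul_prod_erase _ _ (Finset.mem_univ i),
    ← Finset.mul_prod_erase _ (fun j => μ j (s j)) (Finset.mem_univ i), Function.update_self,
    measure_univ, one_mul, mul_comm]
  congr 1
  exact Finset.prod_congr rfl fun j hj => by rw [Function.update_of_ne (Finset.ne_of_mem_erase hj)]

theorem integral_integral_update {ι : Type*} [Fintype ι] [DecidableEq ι] {X : ι → Type*}
    [∀ i, MeasurableSpace (X i)] {μ : ∀ i, Measure (X i)} [∀ i, IsProbabilityMeasure (μ i)]
    {f : (∀ i, X i) → ℝ} (hf : Integrable f (Measure.pi μ)) (i : ι) :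
    ∫ U, ∫ y, f (Function.update U i y) ∂μ i ∂Measure.pi μ = ∫ U, f U ∂Measure.pi μ := by
  have hpres := measurePreserving_update μ i
  calc _ = ∫ p, f (Function.update p.1 i p.2) ∂(Measure.pi μ).prod (μ i) :=
        (integral_prod _ (hpres.integrable_comp_of_integrable hf)).symm
    _ = ∫ U, f U ∂Measure.map (fun p => Function.update p.1 i p.2) ((Measure.pi μ).prod (μ i)) :=
        (integral_map hpres.aemeasurable (by
          rw [hpres.map_eq]
          exact hf.aestronglyMeasurable)).symm
    _ = _ := by rw [hpres.map_eq]

variable {X Y : Type*} [MeasurableSpace X] [MeasurableSpace Y]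

theorem variance_le_sq_of_forall_sub_le {μ : Measure X} [IsProbabilityMeasure μ] {g : X → ℝ}
    (hg : Measurable g) {C : ℝ} (hC : ∀ x y, g x - g y ≤ C) : variance g μ ≤ (C / 2) ^ 2 := by
  have : Nonempty X := nonempty_of_isProbabilityMeasure μ
  have hlower : ∀ x y, g x - C ≤ g y := fun x y => by linarith [hC x y]
  have hbdd : BddBelow (range g) :=
    ⟨g (Classical.arbitrary X) - C, forall_mem_range.mpr (hlower _)⟩
  have hrange : ∀ x, g x ∈ Icc (⨅ y, g y) ((⨅ y, g y) + C) := fun x =>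
    ⟨ciInf_le hbdd x, by linarith [le_ciInf (hlower x)]⟩
  simpa using variance_le_sq_of_bounded (ae_of_all μ hrange) hg.aemeasurable

theorem variance_prod_eq {μ : Measure X} {ν : Measure Y} [IsProbabilityMeasure μ]
    [IsProbabilityMeasure ν] {F : X × Y → ℝ} (hF : Measurable F) {M : ℝ} (hM : ∀ p, |F p| ≤ M) :
    variance F (μ.prod ν) =
      ∫ y, variance (fun x => F (x, y)) μ ∂ν + variance (fun y => ∫ x, F (x, y) ∂μ) ν := by
  have hsection (y : Y) : Measurable fun x => F (x, y) := hF.comp measurable_prodMk_right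
  have hmarginal : Measurable fun y => ∫ x, F (x, y) ∂μ :=
    (StronglyMeasurable.integral_prod_left' hF.stronglyMeasurable).measurable
  have hmarginal_le (y : Y) : |∫ x, F (x, y) ∂μ| ≤ M := abs_integral_le_of_abs_le fun x => hM (x, y)
  have hsq_le {t : ℝ} (ht : |t| ≤ M) : |t ^ 2| ≤ M ^ 2 := by
    rw [abs_pow]
    gcongr
  have hsq : Integrable (fun p => F p ^ 2) (μ.prod ν) :=
    integrable_of_abs_le (hF.pow_const 2) fun p => hsq_le (hM p)
  have hmarginal_sq : Integrable (fun y => (∫ x, F (x, y) ∂μ) ^ 2) ν :=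
    integrable_of_abs_le (hmarginal.pow_const 2) fun y => hsq_le (hmarginal_le y)
  have hsection_var (y : Y) : variance (fun x => F (x, y)) μ =
      ∫ x, F (x, y) ^ 2 ∂μ - (∫ x, F (x, y) ∂μ) ^ 2 :=
    variance_eq_sub (.of_bound (hsection y).aestronglyMeasurable M (ae_of_all _ fun x => hM (x, y)))
  simp only [hsection_var]
  rw [variance_eq_sub (.of_bound hF.aestronglyMeasurable M (ae_of_all _ hM)),
    variance_eq_sub (.of_bound hmarginal.aestronglyMeasurable M (ae_of_all _ hmarginal_le)),
    integral_sub hsq.integral_prod_right hmarginal_sq]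
  simp only [Pi.pow_apply]
  rw [integral_prod_symm _ hsq,
    integral_prod_symm _ (integrable_of_abs_le hF hM)]
  ring

theorem measurePreserving_cons {n : ℕ} (μ : Fin (n + 1) → Measure X)
    [∀ i, IsProbabilityMeasure (μ i)] :
    MeasurePreserving (fun p : X × (Fin n → X) => (Fin.cons p.1 p.2 : Fin (n + 1) → X))
      ((μ 0).prod (Measure.pi fun j => μ j.succ)) (Measure.pi μ) := by
  convert (measurePreserving_piFinSuccAbove μ 0).symm using 1
  · ext p : 1
    exact (Fin.insertNth_zero' p.1 p.2).symm
  · simp only [Fin.zero_succAbove]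

theorem variance_pi_le_of_bounded_differences {n : ℕ} {μ : Fin n → Measure X}
    [∀ i, IsProbabilityMeasure (μ i)] {T : (Fin n → X) → ℝ} (hT : Measurable T) {M : ℝ}
    (hM : ∀ U, |T U| ≤ M) {c : Fin n → ℝ} (hc : ∀ U i y, T U - T (Function.update U i y) ≤ c i) :
    variance T (Measure.pi μ) ≤ ∑ i, (c i / 2) ^ 2 := by
  induction n with
  | zero =>
    have hconst (U : Fin 0 → X) : T U = T default := congrArg T (Subsingleton.elim _ _)
    rw [variance_congr (ae_of_all _ hconst), variance_eq_integral aemeasurable_const]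
    simp
  | succ n ih =>
    set S : X → (Fin n → X) → ℝ := fun x U => T (Fin.cons x U)
    have hpres := measurePreserving_cons μ
    have hS : Measurable (Function.uncurry S) := hT.comp hpres.measurable
    have hS_section (U : Fin n → X) : Measurable fun x => S x U := hS.comp measurable_prodMk_right
    have hS_int (U : Fin n → X) : Integrable (fun x => S x U) (μ 0) :=
      integrable_of_abs_le (hS_section U) fun x => hM _
    have hsection (U : Fin n → X) : variance (fun x => S x U) (μ 0) ≤ (c 0 / 2) ^ 2 :=
      variance_le_sq_of_forall_sub_le (hS_section U) fun x y => by
        simpa only [S, Fin.update_cons_zero] using hc (Fin.cons x U) 0 y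
    have hmarginal : variance (fun U => ∫ x, S x U ∂μ 0) (Measure.pi fun j : Fin n => μ j.succ) ≤
        ∑ j : Fin n, (c j.succ / 2) ^ 2 := by
      refine ih hS.stronglyMeasurable.integral_prod_left.measurable
        (fun U => abs_integral_le_of_abs_le fun x => hM _) fun U j y => ?_
      rw [← integral_sub (hS_int _) (hS_int _)]
      refine (integral_mono ((hS_int _).sub (hS_int _)) (integrable_const (c j.succ))
        fun x => ?_).trans_eq (by simp)
      simpa only [S, Fin.cons_update, Pi.sub_apply] using hc (Fin.cons x U) j.succ y
    have hsections : ∫ U, variance (fun x => S x U) (μ 0) ∂(Measure.pi fun j : Fin n => μ j.succ) ≤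
        (c 0 / 2) ^ 2 := by
      refine (integral_mono_of_nonneg (ae_of_all _ fun U => variance_nonneg _ _)
        (integrable_const ((c 0 / 2) ^ 2)) (ae_of_all _ hsection)).trans_eq (by simp)
    calc variance T (Measure.pi μ)
        = variance (Function.uncurry S) ((μ 0).prod (Measure.pi fun j => μ j.succ)) :=
          (hpres.variance_fun_comp hT.aemeasurable).symm
      _ ≤ ∑ i, (c i / 2) ^ 2 := by
          rw [variance_prod_eq hS fun p => hM _, Fin.sum_univ_succ]
          exact add_le_add hsections hmarginal

end ProductMeasure

/-- A grain centred at `x` covers `z` with probability `r (x, z)`; each point is covered by the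
grain of a `ν`-distributed centre with probability `θ`. Balls give the indicator of
`D(x, z) ≤ ρ`. -/
structure IsCoverKernel {X : Type*} [MeasurableSpace X] (ν : Measure X) (r : X × X → ℝ) (θ : ℝ) :
    Prop where
  measurable : Measurable r
  nonneg : ∀ p, 0 ≤ r p
  le_one : ∀ p, r p ≤ 1
  symm : ∀ x y, r (x, y) = r (y, x)
  integral_right : ∀ x, ∫ y, r (x, y) ∂ν = θ

/-- The probability that `z` is left uncovered by the grains centred at `U j`, `j ∈ s`. -/
def vacancy {X ι : Type*} (r : X × X → ℝ) (s : Finset ι) (U : ι → X) (z : X) : ℝ :=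
  ∏ j ∈ s, (1 - r (U j, z))

/-- The covered proportion of the space. -/
def coverage {X ι : Type*} [MeasurableSpace X] [Fintype ι] (ν : Measure X) (r : X × X → ℝ)
    (U : ι → X) : ℝ :=
  1 - ∫ z, vacancy r Finset.univ U z ∂ν

section Coverage

variable {X ι : Type*} {r : X × X → ℝ}

theorem vacancy_congr {s : Finset ι} {U W : ι → X} (h : ∀ j ∈ s, U j = W j) :
    vacancy r s U = vacancy r s W := by
  ext z
  exact Finset.prod_congr rfl fun j hj => by rw [h j hj]

theorem vacancy_update [DecidableEq ι] {s : Finset ι} {i : ι} (hi : i ∉ s) (U : ι → X) (y : X) :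
    vacancy r s (Function.update U i y) = vacancy r s U :=
  vacancy_congr fun _ hj => Function.update_of_ne (ne_of_mem_of_not_mem hj hi) _ _

theorem vacancy_eq_mul_erase [DecidableEq ι] {s : Finset ι} {i : ι} (hi : i ∈ s) (U : ι → X)
    (z : X) : vacancy r s U z = (1 - r (U i, z)) * vacancy r (s.erase i) U z :=
  (Finset.mul_prod_erase s (fun j => 1 - r (U j, z)) hi).symm

-- Exactly one index of `s` being hit and no index being hit are disjoint events.
theorem sum_mul_prod_erase_le_one [DecidableEq ι] (s : Finset ι) {a : ι → ℝ}
    (ha0 : ∀ i, 0 ≤ a i) (ha1 : ∀ i, a i ≤ 1) :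
    ∑ i ∈ s, a i * ∏ j ∈ s.erase i, (1 - a j) + ∏ j ∈ s, (1 - a j) ≤ 1 := by
  induction s using Finset.induction_on with
  | empty => simp
  | insert b s hb ih =>
    have hfactor : ∑ i ∈ s, a i * ∏ j ∈ (insert b s).erase i, (1 - a j) =
        (1 - a b) * ∑ i ∈ s, a i * ∏ j ∈ s.erase i, (1 - a j) := by
      rw [Finset.mul_sum]
      refine Finset.sum_congr rfl fun i hi => ?_
      rw [Finset.erase_insert_of_ne (ne_of_mem_of_not_mem hi hb).symm,
        Finset.prod_insert (fun h => hb (Finset.mem_of_mem_erase h))]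
      ring
    have hprod : ∏ j ∈ s, (1 - a j) ≤ 1 :=
      Finset.prod_le_one (fun i _ => sub_nonneg.mpr (ha1 i)) fun i _ => sub_le_self 1 (ha0 i)
    rw [Finset.sum_insert hb, Finset.prod_insert hb, Finset.erase_insert hb, hfactor]
    nlinarith [ha0 b, ha1 b]

variable [MeasurableSpace X]

@[fun_prop]
theorem measurable_vacancy {α : Type*} [MeasurableSpace α] (hr : Measurable r) (s : Finset ι)
    {U : α → ι → X} {z : α → X} (hU : Measurable U) (hz : Measurable z) :
    Measurable fun a => vacancy r s (U a) (z a) := by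
  unfold vacancy
  fun_prop

variable {ν : Measure X} {θ : ℝ}

namespace IsCoverKernel

section Pointwise

variable (hr : IsCoverKernel ν r θ) (s : Finset ι) (U : ι → X)
include hr

theorem abs_le_one (p : X × X) : |r p| ≤ 1 := by
  rw [abs_of_nonneg (hr.nonneg p)]
  exact hr.le_one p

theorem vacancy_nonneg (z : X) : 0 ≤ vacancy r s U z :=
  Finset.prod_nonneg fun i _ => sub_nonneg.mpr (hr.le_one (U i, z))

theorem vacancy_le_one (z : X) : vacancy r s U z ≤ 1 :=
  Finset.prod_le_one (fun i _ => sub_nonneg.mpr (hr.le_one (U i, z)))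
    fun i _ => sub_le_self 1 (hr.nonneg (U i, z))

theorem abs_vacancy_le_one (z : X) : |vacancy r s U z| ≤ 1 := by
  rw [abs_of_nonneg (hr.vacancy_nonneg s U z)]
  exact hr.vacancy_le_one s U z

theorem vacancy_le_erase [DecidableEq ι] (k : ι) (z : X) :
    vacancy r s U z ≤ vacancy r (s.erase k) U z := by
  by_cases hk : k ∈ s
  · rw [vacancy_eq_mul_erase hk]
    exact mul_le_of_le_one_left (hr.vacancy_nonneg _ U z) (sub_le_self 1 (hr.nonneg _))
  · rw [Finset.erase_eq_of_notMem hk]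

theorem mul_erase_le_vacancy [DecidableEq ι] (k : ι) (z : X) :
    (1 - r (U k, z)) * vacancy r (s.erase k) U z ≤ vacancy r s U z := by
  by_cases hk : k ∈ s
  · rw [vacancy_eq_mul_erase hk]
  · rw [Finset.erase_eq_of_notMem hk]
    exact mul_le_of_le_one_left (hr.vacancy_nonneg s U z) (sub_le_self 1 (hr.nonneg _))

theorem integral_left (y : X) : ∫ x, r (x, y) ∂ν = θ := by
  simpa only [hr.symm _ y] using hr.integral_right y

end Pointwise

variable [IsProbabilityMeasure ν] (hr : IsCoverKernel ν r θ)
include hr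

theorem integrable_right (x : X) : Integrable (fun y => r (x, y)) ν :=
  integrable_of_abs_le (hr.measurable.comp measurable_prodMk_left) fun _ => hr.abs_le_one _

theorem integrable_prod : Integrable r (ν.prod ν) :=
  integrable_of_abs_le hr.measurable hr.abs_le_one

theorem theta_mem_Icc : θ ∈ Icc (0 : ℝ) 1 := by
  obtain ⟨x⟩ := nonempty_of_isProbabilityMeasure ν
  rw [← hr.integral_right x]
  exact ⟨integral_nonneg fun y => hr.nonneg _, (integral_mono (hr.integrable_right x)
    (integrable_const (1 : ℝ)) fun y => hr.le_one (x, y)).trans_eq (by simp)⟩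

theorem theta_nonneg : 0 ≤ θ := hr.theta_mem_Icc.1

theorem one_sub_theta_pow_mem_Icc (m : ℕ) : (1 - θ) ^ m ∈ Icc (0 : ℝ) 1 := by
  obtain ⟨h0, h1⟩ := hr.theta_mem_Icc
  exact ⟨pow_nonneg (by linarith) m, pow_le_one₀ (by linarith) (by linarith)⟩

theorem integral_prod_mul_fst {b : X → ℝ} (hb : Integrable (fun w => r w * b w.1) (ν.prod ν)) :
    ∫ w, r w * b w.1 ∂ν.prod ν = θ * ∫ x, b x ∂ν := by
  simp only [MeasureTheory.integral_prod _ hb, integral_mul_const, hr.integral_right,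
    integral_const_mul]

theorem integral_prod_mul_snd {b : X → ℝ} (hb : Integrable (fun w => r w * b w.2) (ν.prod ν)) :
    ∫ w, r w * b w.2 ∂ν.prod ν = θ * ∫ x, b x ∂ν := by
  simp only [integral_prod_symm _ hb, integral_mul_const, hr.integral_left, integral_const_mul]

theorem integral_prod_eq : ∫ w, r w ∂ν.prod ν = θ := by
  simpa using hr.integral_prod_mul_fst (b := 1) (by simpa using hr.integrable_prod)

theorem integrable_vacancy (s : Finset ι) (U : ι → X) : Integrable (vacancy r s U) ν := by
  have := hr.measurable
  exact integrable_of_abs_le (by fun_prop) (hr.abs_vacancy_le_one s U)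

theorem integrable_vacancy_mul (s : Finset ι) (U : ι → X) (y : X) :
    Integrable (fun z => vacancy r s U z * r (y, z)) ν := by
  have := hr.measurable
  exact (hr.integrable_right y).bdd_mul (c := 1)
    (hr.integrable_vacancy s U).aestronglyMeasurable (ae_of_all _ (hr.abs_vacancy_le_one s U))

theorem integral_vacancy_mul_mem_Icc (s : Finset ι) (U : ι → X) (y : X) :
    ∫ z, vacancy r s U z * r (y, z) ∂ν ∈ Icc 0 θ := by
  refine ⟨integral_nonneg fun z => mul_nonneg (hr.vacancy_nonneg s U z) (hr.nonneg _), ?_⟩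
  rw [← hr.integral_right y]
  exact integral_mono (hr.integrable_vacancy_mul s U y) (hr.integrable_right y) fun z =>
    mul_le_of_le_one_left (hr.nonneg _) (hr.vacancy_le_one s U z)

variable [Fintype ι]

theorem measurable_coverage : Measurable (coverage ν r : (ι → X) → ℝ) := by
  have := hr.measurable
  have hjoint : Measurable fun p : (ι → X) × X => vacancy r Finset.univ p.1 p.2 := by fun_prop
  exact measurable_const.sub (hjoint.stronglyMeasurable.integral_prod_right' (ν := ν)).measurable

theorem coverage_mem_Icc (U : ι → X) : coverage ν r U ∈ Icc (0 : ℝ) 1 := by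
  have hle : ∫ z, vacancy r Finset.univ U z ∂ν ≤ 1 :=
    (integral_mono (hr.integrable_vacancy _ U) (integrable_const (1 : ℝ))
      (hr.vacancy_le_one _ U)).trans_eq (by simp)
  exact ⟨sub_nonneg.mpr hle, sub_le_self 1 (integral_nonneg (hr.vacancy_nonneg _ U))⟩

theorem abs_coverage_le_one (U : ι → X) : |coverage ν r U| ≤ 1 := by
  obtain ⟨h0, h1⟩ := hr.coverage_mem_Icc U
  rwa [abs_of_nonneg h0]

theorem integrable_coverage {P : Measure (ι → X)} [IsFiniteMeasure P] :
    Integrable (coverage ν r) P :=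
  integrable_of_abs_le hr.measurable_coverage hr.abs_coverage_le_one

theorem memLp_coverage {P : Measure (ι → X)} [IsFiniteMeasure P] {p : ℝ≥0∞} :
    MemLp (coverage ν r) p P :=
  .of_bound hr.measurable_coverage.aestronglyMeasurable 1 (ae_of_all _ hr.abs_coverage_le_one)

theorem coverage_update_sub [DecidableEq ι] (U : ι → X) (i : ι) (y : X) :
    coverage ν r (Function.update U i y) - coverage ν r U =
      ∫ z, vacancy r (Finset.univ.erase i) U z * r (y, z) ∂ν -
        ∫ z, vacancy r (Finset.univ.erase i) U z * r (U i, z) ∂ν := by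
  rw [coverage, coverage, sub_sub_sub_cancel_left,
    ← integral_sub (hr.integrable_vacancy _ _) (hr.integrable_vacancy _ _),
    ← integral_sub (hr.integrable_vacancy_mul _ _ _) (hr.integrable_vacancy_mul _ _ _)]
  refine integral_congr_ae (ae_of_all _ fun z => ?_)
  simp only [vacancy_eq_mul_erase (Finset.mem_univ i),
    vacancy_update (Finset.notMem_erase i _), Function.update_self]
  ring

theorem abs_coverage_update_sub_le [DecidableEq ι] (U : ι → X) (i : ι) (y : X) :
    |coverage ν r (Function.update U i y) - coverage ν r U| ≤ θ := by
  rw [hr.coverage_update_sub]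
  obtain ⟨hnew_nonneg, hnew_le⟩ := hr.integral_vacancy_mul_mem_Icc (Finset.univ.erase i) U y
  obtain ⟨hold_nonneg, hold_le⟩ := hr.integral_vacancy_mul_mem_Icc (Finset.univ.erase i) U (U i)
  exact abs_sub_le_of_nonneg_of_le hnew_nonneg hnew_le hold_nonneg hold_le

end IsCoverKernel

end Coverage

/-- Total of `h` over the resamplings: the `i`-th point moves to `w.2` when its new grain covers a
point `w.1` left vacant by the later points, the weight `(1 - θ) ^ i` accounting for vacancy left by
the `i` earlier points, which are averaged out. -/
def resampleSum {X : Type*} [MeasurableSpace X] {n : ℕ} (ν : Measure X) (r : X × X → ℝ) (θ : ℝ)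
    (U : Fin n → X) (h : Fin n → X × X → ℝ) : ℝ :=
  ∑ i : Fin n, (1 - θ) ^ (i : ℕ) *
    ∫ w, r w * vacancy r (Finset.Ioi i) U w.1 * h i w ∂ν.prod ν

/-- Total increment of `g` over the resamplings. -/
def resampleDiff {X : Type*} [MeasurableSpace X] {n : ℕ} (ν : Measure X) (r : X × X → ℝ) (θ : ℝ)
    (g : (Fin n → X) → ℝ) (U : Fin n → X) : ℝ :=
  resampleSum ν r θ U fun i w => g (Function.update U i w.2) - g U

section Resampling

theorem sum_pow_mul_eq_one_sub_pow (n : ℕ) (θ : ℝ) :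
    ∑ i : Fin n, (1 - θ) ^ (i : ℕ) * θ = 1 - (1 - θ) ^ n := by
  rw [← Finset.sum_mul, Fin.sum_univ_eq_sum_range (fun i => (1 - θ) ^ i) n]
  linarith [geom_sum_mul (1 - θ) n]

theorem pow_sub_prod_eq_sum (n : ℕ) (c : ℝ) (a : Fin n → ℝ) :
    c ^ n - ∏ j, a j = ∑ i : Fin n, c ^ (i : ℕ) * ((c - a i) * ∏ j ∈ Finset.Ioi i, a j) := by
  induction n with
  | zero => simp
  | succ n ih =>
    have htail : ∑ i : Fin n, c ^ (i.succ : ℕ) *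
        ((c - a i.succ) * ∏ j ∈ Finset.Ioi i, a j.succ) = c * (c ^ n - ∏ j : Fin n, a j.succ) := by
      rw [ih fun j => a j.succ, Finset.mul_sum]
      refine Finset.sum_congr rfl fun i _ => ?_
      rw [Fin.val_succ]
      ring
    simp only [Fin.sum_univ_succ, Fin.prod_univ_succ, Fin.prod_Ioi_zero, Fin.prod_Ioi_succ, htail,
      Fin.val_zero, pow_zero]
    ring

variable {X : Type*} [MeasurableSpace X] {ν : Measure X} {r : X × X → ℝ} {θ : ℝ} {n : ℕ}

theorem integrable_increment [IsProbabilityMeasure ν] {g : (Fin n → X) → ℝ} (hg : Measurable g)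
    {K : ℝ} (hK : ∀ U, |g U| ≤ K) (U : Fin n → X) (i : Fin n) :
    Integrable (fun w : X × X => g (Function.update U i w.2) - g U) (ν.prod ν) :=
  (integrable_of_abs_le (hg.comp ((measurable_update U).comp measurable_snd)) fun _ => hK _).sub
    (integrable_const (g U))

namespace IsCoverKernel

theorem integrable_weight_mul (hr : IsCoverKernel ν r θ) (s : Finset (Fin n)) (U : Fin n → X)
    {f : X × X → ℝ} (hf : Integrable f (ν.prod ν)) :
    Integrable (fun w => r w * vacancy r s U w.1 * f w) (ν.prod ν) := by
  have := hr.measurable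
  refine hf.bdd_mul (c := 1) (by fun_prop) (ae_of_all _ fun w => ?_)
  rw [Real.norm_eq_abs, abs_mul]
  exact mul_le_one₀ (hr.abs_le_one _) (abs_nonneg _) (hr.abs_vacancy_le_one _ _ _)

theorem resampleSum_sub_mul (hr : IsCoverKernel ν r θ) {U : Fin n → X} {f h : Fin n → X × X → ℝ}
    (hf : ∀ i, Integrable (f i) (ν.prod ν)) (hh : ∀ i, Integrable (h i) (ν.prod ν)) (c : ℝ) :
    resampleSum ν r θ U (fun i w => f i w - c * h i w) =
      resampleSum ν r θ U f - c * resampleSum ν r θ U h := by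
  rw [resampleSum, resampleSum, resampleSum, Finset.mul_sum, ← Finset.sum_sub_distrib]
  refine Finset.sum_congr rfl fun i _ => ?_
  rw [mul_left_comm c, ← mul_sub, ← integral_const_mul c, ← integral_sub
      (hr.integrable_weight_mul _ U (hf i)) ((hr.integrable_weight_mul _ U (hh i)).const_mul c)]
  congr 2 with w
  ring

variable [IsProbabilityMeasure ν] (hr : IsCoverKernel ν r θ)
include hr

theorem abs_resampleSum_le {U : Fin n → X} {h : Fin n → X × X → ℝ} {K : ℝ}
    (hK : ∀ i w, |h i w| ≤ K) : |resampleSum ν r θ U h| ≤ (1 - (1 - θ) ^ n) * K := by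
  have hterm (i : Fin n) :
      |∫ w, r w * vacancy r (Finset.Ioi i) U w.1 * h i w ∂ν.prod ν| ≤ θ * K := by
    have hmass : ∫ w, r w * K ∂ν.prod ν = θ * K := by rw [integral_mul_const, hr.integral_prod_eq]
    rw [← Real.norm_eq_abs, ← hmass]
    refine norm_integral_le_of_norm_le (hr.integrable_prod.mul_const K) (ae_of_all _ fun w => ?_)
    rw [Real.norm_eq_abs, abs_mul, abs_mul, abs_of_nonneg (hr.nonneg w)]
    exact mul_le_mul (mul_le_of_le_one_right (hr.nonneg w) (hr.abs_vacancy_le_one _ _ _)) (hK i w)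
      (abs_nonneg _) (hr.nonneg w)
  rw [← sum_pow_mul_eq_one_sub_pow, Finset.sum_mul]
  refine (Finset.abs_sum_le_sum_abs _ _).trans (Finset.sum_le_sum fun i _ => ?_)
  have hpow := (hr.one_sub_theta_pow_mem_Icc i).1
  rw [abs_mul, abs_of_nonneg hpow, mul_assoc]
  exact mul_le_mul_of_nonneg_left (hterm i) hpow

theorem abs_resampleDiff_coverage_le (U : Fin n → X) :
    |resampleDiff ν r θ (coverage ν r) U| ≤ (1 - (1 - θ) ^ n) * θ :=
  hr.abs_resampleSum_le fun i w => hr.abs_coverage_update_sub_le U i w.2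

theorem coverage_sub_eq_sum (U : Fin n → X) :
    coverage ν r U - (1 - (1 - θ) ^ n) = ∑ i : Fin n, (1 - θ) ^ (i : ℕ) *
      (∫ z, vacancy r (Finset.Ioi i) U z * r (U i, z) ∂ν -
        θ * ∫ z, vacancy r (Finset.Ioi i) U z ∂ν) := by
  have hhit (i : Fin n) := hr.integrable_vacancy_mul (Finset.Ioi i) U (U i)
  have hvac (i : Fin n) := (hr.integrable_vacancy (Finset.Ioi i) U).const_mul θ
  have hterm (i : Fin n) : Integrable (fun z => (1 - θ) ^ (i : ℕ) *
      (vacancy r (Finset.Ioi i) U z * r (U i, z) - θ * vacancy r (Finset.Ioi i) U z)) ν :=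
    ((hhit i).sub (hvac i)).const_mul _
  have htelescope (z : X) : (1 - θ) ^ n - vacancy r Finset.univ U z = ∑ i : Fin n,
      (1 - θ) ^ (i : ℕ) * (vacancy r (Finset.Ioi i) U z * r (U i, z) -
        θ * vacancy r (Finset.Ioi i) U z) := by
    rw [vacancy, pow_sub_prod_eq_sum]
    refine Finset.sum_congr rfl fun i _ => ?_
    rw [vacancy]
    ring
  calc coverage ν r U - (1 - (1 - θ) ^ n)
      = ∫ z, ((1 - θ) ^ n - vacancy r Finset.univ U z) ∂ν := by
        rw [integral_sub (integrable_const _) (hr.integrable_vacancy _ U), coverage]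
        simp
    _ = _ := by
        simp only [htelescope]
        rw [integral_finsetSum _ fun i _ => hterm i]
        refine Finset.sum_congr rfl fun i _ => ?_
        rw [integral_const_mul, integral_sub (hhit i) (hvac i), integral_const_mul]

section Bounded

variable {g : (Fin n → X) → ℝ} (hg : Measurable g) {K : ℝ} (hK : ∀ U, |g U| ≤ K)
include hg

theorem measurable_integral_increment (i : Fin n) :
    Measurable fun U => ∫ w, r w * vacancy r (Finset.Ioi i) U w.1 *
      (g (Function.update U i w.2) - g U) ∂ν.prod ν := by
  have := hr.measurable
  have : Measurable fun p : (Fin n → X) × (X × X) => g (Function.update p.1 i p.2.2) :=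
    hg.comp (measurable_update'.comp (measurable_fst.prodMk measurable_snd.snd))
  have hjoint : Measurable fun p : (Fin n → X) × (X × X) => r p.2 *
      vacancy r (Finset.Ioi i) p.1 p.2.1 * (g (Function.update p.1 i p.2.2) - g p.1) := by
    fun_prop
  exact (hjoint.stronglyMeasurable.integral_prod_right' (ν := ν.prod ν)).measurable

theorem measurable_resampleDiff : Measurable (resampleDiff ν r θ g) := by
  unfold resampleDiff resampleSum
  exact Finset.measurable_fun_sum _ fun i _ => (hr.measurable_integral_increment hg i).const_mul _

include hK

theorem integrable_integral_increment (i : Fin n) :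
    Integrable (fun U => ∫ w, r w * vacancy r (Finset.Ioi i) U w.1 *
      (g (Function.update U i w.2) - g U) ∂ν.prod ν) (Measure.pi fun _ => ν) := by
  refine integrable_of_abs_le (hr.measurable_integral_increment hg i) (C := 1 * (K + K))
    fun U => abs_integral_le_of_abs_le fun w => ?_
  rw [abs_mul, abs_mul]
  gcongr
  · exact mul_le_one₀ (hr.abs_le_one _) (abs_nonneg _) (hr.abs_vacancy_le_one _ _ _)
  · exact (abs_sub _ _).trans (add_le_add (hK _) (hK U))

theorem integral_increment_eq (U : Fin n → X) (i : Fin n) :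
    ∫ w, r w * vacancy r (Finset.Ioi i) U w.1 * (g (Function.update U i w.2) - g U) ∂ν.prod ν =
      ∫ y, (∫ x, vacancy r (Finset.Ioi i) U x * r (y, x) ∂ν) * g (Function.update U i y) ∂ν -
        θ * (∫ x, vacancy r (Finset.Ioi i) U x ∂ν) * g U := by
  have hone := hr.integrable_weight_mul (Finset.Ioi i) U (integrable_const (1 : ℝ))
  have hmoved := hr.integrable_weight_mul (Finset.Ioi i) U (integrable_of_abs_le
    (hg.comp ((measurable_update U (a := i)).comp measurable_snd)) fun w => hK _)
  simp only [mul_one] at hone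
  simp only [mul_sub, Function.comp_apply] at hmoved ⊢
  rw [integral_sub hmoved (hone.mul_const _), integral_mul_const, hr.integral_prod_mul_fst hone,
    integral_prod_symm _ hmoved]
  simp only [integral_mul_const, hr.symm _, mul_comm (r _)]

theorem integrable_hit_mul (i : Fin n) :
    Integrable (fun U => (∫ x, vacancy r (Finset.Ioi i) U x * r (U i, x) ∂ν) * g U)
      (Measure.pi fun _ => ν) := by
  have := hr.measurable
  have hjoint : Measurable fun p : (Fin n → X) × X =>
      vacancy r (Finset.Ioi i) p.1 p.2 * r (p.1 i, p.2) := by fun_prop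
  refine (integrable_of_abs_le hg hK).bdd_mul (c := θ)
    hjoint.stronglyMeasurable.integral_prod_right'.aestronglyMeasurable (ae_of_all _ fun U => ?_)
  obtain ⟨h0, hle⟩ := hr.integral_vacancy_mul_mem_Icc (Finset.Ioi i) U (U i)
  rwa [Real.norm_eq_abs, abs_of_nonneg h0]

theorem integrable_vacancy_integral_mul (s : Finset (Fin n)) :
    Integrable (fun U => θ * (∫ x, vacancy r s U x ∂ν) * g U) (Measure.pi fun _ => ν) := by
  have := hr.measurable
  have hjoint : Measurable fun p : (Fin n → X) × X => vacancy r s p.1 p.2 := by fun_prop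
  simp only [mul_assoc]
  refine Integrable.const_mul ((integrable_of_abs_le hg hK).bdd_mul (c := 1)
    hjoint.stronglyMeasurable.integral_prod_right'.aestronglyMeasurable
    (ae_of_all _ fun U => ?_)) θ
  exact abs_integral_le_of_abs_le (hr.abs_vacancy_le_one s U)

-- The vacancy left by the later points does not involve the `i`-th one, so that the resampled
-- `i`-th point may be renamed `U i`.
theorem integral_integral_increment (i : Fin n) :
    ∫ U, ∫ w, r w * vacancy r (Finset.Ioi i) U w.1 *
        (g (Function.update U i w.2) - g U) ∂ν.prod ν ∂Measure.pi (fun _ => ν) =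
      ∫ U, (∫ z, vacancy r (Finset.Ioi i) U z * r (U i, z) ∂ν -
        θ * ∫ z, vacancy r (Finset.Ioi i) U z ∂ν) * g U ∂Measure.pi fun _ => ν := by
  have hi : i ∉ Finset.Ioi i := by simp only [Finset.mem_Ioi, lt_self_iff_false, not_false_eq_true]
  have hhit := hr.integrable_hit_mul hg hK i
  have hvac := hr.integrable_vacancy_integral_mul hg hK (Finset.Ioi i)
  have hhit_update : Integrable (fun U => ∫ y, (∫ x, vacancy r (Finset.Ioi i) U x * r (y, x) ∂ν) *
      g (Function.update U i y) ∂ν) (Measure.pi fun _ => ν) := by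
    have h := ((measurePreserving_update _ i).integrable_comp_of_integrable hhit).integral_prod_left
    simpa only [Function.comp_apply, vacancy_update hi, Function.update_self] using h
  have hrename := integral_integral_update hhit i
  simp only [vacancy_update hi, Function.update_self] at hrename
  simp only [hr.integral_increment_eq hg hK, sub_mul]
  rw [integral_sub hhit_update hvac, hrename, integral_sub hhit hvac]

theorem integral_coverage_sub_mul :
    ∫ U, (coverage ν r U - (1 - (1 - θ) ^ n)) * g U ∂Measure.pi (fun _ : Fin n => ν) =
      ∫ U, resampleDiff ν r θ g U ∂Measure.pi fun _ => ν := by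
  have hterm (i : Fin n) : Integrable (fun U => (1 - θ) ^ (i : ℕ) *
      ((∫ z, vacancy r (Finset.Ioi i) U z * r (U i, z) ∂ν -
        θ * ∫ z, vacancy r (Finset.Ioi i) U z ∂ν) * g U)) (Measure.pi fun _ => ν) := by
    simp only [sub_mul]
    exact ((hr.integrable_hit_mul hg hK i).sub
      (hr.integrable_vacancy_integral_mul hg hK _)).const_mul _
  have hincrement (i : Fin n) := (hr.integrable_integral_increment hg hK i).const_mul
    ((1 - θ) ^ (i : ℕ))
  simp only [hr.coverage_sub_eq_sum, resampleDiff, resampleSum, Finset.sum_mul]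
  simp only [mul_assoc ((1 - θ) ^ _)]
  rw [integral_finsetSum _ fun i _ => hterm i, integral_finsetSum _ fun i _ => hincrement i]
  simp only [integral_const_mul, hr.integral_integral_increment hg hK]

end Bounded

end IsCoverKernel

end Resampling

/-- The measure of the points covered by both grains centred at `x` and `y` and left vacant by those
centred at `U j`, `j ∈ s`. -/
def vacantOverlap {X ι : Type*} [MeasurableSpace X] (ν : Measure X) (r : X × X → ℝ) (s : Finset ι)
    (U : ι → X) (x y : X) : ℝ :=
  ∫ z, vacancy r s U z * (r (x, z) * r (y, z)) ∂ν

section Differences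

variable {X : Type*} [MeasurableSpace X] {ν : Measure X} {r : X × X → ℝ} {θ : ℝ}

namespace IsCoverKernel

section Overlap

variable {ι : Type*}

theorem vacancy_mul_mem_Icc (hr : IsCoverKernel ν r θ) (s : Finset ι) (U : ι → X) (x y z : X) :
    vacancy r s U z * (r (x, z) * r (y, z)) ∈ Icc 0 (r (y, z)) :=
  have hpair : 0 ≤ r (x, z) * r (y, z) := mul_nonneg (hr.nonneg _) (hr.nonneg _)
  ⟨mul_nonneg (hr.vacancy_nonneg s U z) hpair,
    (mul_le_of_le_one_left hpair (hr.vacancy_le_one s U z)).trans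
      (mul_le_of_le_one_left (hr.nonneg _) (hr.le_one _))⟩

variable [IsProbabilityMeasure ν] (hr : IsCoverKernel ν r θ) (s : Finset ι) (U : ι → X)
include hr

theorem integrable_vacancy_mul_mul (x y : X) :
    Integrable (fun z => vacancy r s U z * (r (x, z) * r (y, z))) ν := by
  have := hr.measurable
  refine (hr.integrable_right y).mono' (by fun_prop) (ae_of_all _ fun z => ?_)
  obtain ⟨h0, hle⟩ := hr.vacancy_mul_mem_Icc s U x y z
  rwa [Real.norm_eq_abs, abs_of_nonneg h0]

theorem vacantOverlap_mem_Icc (x y : X) : vacantOverlap ν r s U x y ∈ Icc 0 θ := by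
  refine ⟨integral_nonneg fun z => (hr.vacancy_mul_mem_Icc s U x y z).1, ?_⟩
  rw [← hr.integral_right y]
  exact integral_mono (hr.integrable_vacancy_mul_mul s U x y) (hr.integrable_right y) fun z =>
    (hr.vacancy_mul_mem_Icc s U x y z).2

theorem integrable_vacantOverlap (y : X) : Integrable (fun x => vacantOverlap ν r s U x y) ν := by
  have := hr.measurable
  have hjoint : Measurable fun p : X × X => vacancy r s U p.2 * (r p * r (y, p.2)) := by fun_prop
  refine integrable_of_abs_le (C := θ)
    (hjoint.stronglyMeasurable.integral_prod_right' (ν := ν)).measurable fun x => ?_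
  obtain ⟨h0, hle⟩ := hr.vacantOverlap_mem_Icc s U x y
  exact (abs_of_nonneg h0).trans_le hle

theorem integral_vacantOverlap_le (y : X) : ∫ x, vacantOverlap ν r s U x y ∂ν ≤ θ ^ 2 := by
  have := hr.measurable
  have hjoint : Integrable (fun p : X × X => vacancy r s U p.2 * (r p * r (y, p.2)))
      (ν.prod ν) := by
    refine ((hr.integrable_right y).comp_snd ν).mono' (by fun_prop) (ae_of_all _ fun p => ?_)
    obtain ⟨h0, hle⟩ := hr.vacancy_mul_mem_Icc s U p.1 y p.2
    rwa [Real.norm_eq_abs, abs_of_nonneg h0]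
  calc ∫ x, vacantOverlap ν r s U x y ∂ν
      = θ * ∫ z, vacancy r s U z * r (y, z) ∂ν := by
        simp only [vacantOverlap]
        rw [integral_integral_swap hjoint, ← integral_const_mul]
        refine integral_congr_ae (ae_of_all _ fun z => ?_)
        simp only [integral_const_mul, integral_mul_const, hr.integral_left]
        ring
    _ ≤ θ ^ 2 := by
        rw [sq]
        exact mul_le_mul_of_nonneg_left (hr.integral_vacancy_mul_mem_Icc s U y).2 hr.theta_nonneg

theorem sum_vacantOverlap_le [Fintype ι] [DecidableEq ι] (k : ι) :
    ∑ i ∈ Finset.univ.erase k, vacantOverlap ν r ((Finset.univ.erase i).erase k) U (U i) (U k) ≤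
      θ := by
  simp only [vacantOverlap]
  rw [← integral_finsetSum _ fun i _ => hr.integrable_vacancy_mul_mul _ U (U i) (U k),
    ← hr.integral_right (U k)]
  refine integral_mono (integrable_finsetSum _ fun i _ =>
    hr.integrable_vacancy_mul_mul _ U (U i) (U k)) (hr.integrable_right _) fun z => ?_
  have hone := sum_mul_prod_erase_le_one (Finset.univ.erase k) (a := fun j => r (U j, z))
    (fun _ => hr.nonneg _) fun _ => hr.le_one _
  calc ∑ i ∈ Finset.univ.erase k,
        vacancy r ((Finset.univ.erase i).erase k) U z * (r (U i, z) * r (U k, z))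
      = (∑ i ∈ Finset.univ.erase k,
        r (U i, z) * ∏ j ∈ (Finset.univ.erase k).erase i, (1 - r (U j, z))) * r (U k, z) := by
        rw [Finset.sum_mul]
        refine Finset.sum_congr rfl fun i _ => ?_
        rw [Finset.erase_right_comm, vacancy]
        ring
    _ ≤ r (U k, z) := mul_le_of_le_one_left (hr.nonneg _)
        ((le_add_of_nonneg_right (hr.vacancy_nonneg _ U z)).trans hone)

end Overlap

section OneCoordinate

variable {ι : Type*} [DecidableEq ι] {U W : ι → X} {k : ι}

theorem vacancy_mul_vacancy_sub_le (hr : IsCoverKernel ν r θ) (hUW : ∀ j ≠ k, U j = W j)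
    (s t : Finset ι) (x z : X) :
    vacancy r s U x * vacancy r t U z - vacancy r s W x * vacancy r t W z ≤
      vacancy r (t.erase k) U z * (r (W k, x) + r (W k, z)) := by
  have herase (s : Finset ι) : vacancy r (s.erase k) U = vacancy r (s.erase k) W :=
    vacancy_congr fun j hj => hUW j (Finset.ne_of_mem_erase hj)
  have hS := hr.vacancy_nonneg (s.erase k) U x
  have hS1 := hr.vacancy_le_one (s.erase k) U x
  have hT := hr.vacancy_nonneg (t.erase k) U z
  have ha := hr.nonneg (W k, x)
  have hb := hr.nonneg (W k, z)
  have hupper : vacancy r s U x * vacancy r t U z ≤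
      vacancy r (s.erase k) U x * vacancy r (t.erase k) U z :=
    mul_le_mul (hr.vacancy_le_erase s U k x) (hr.vacancy_le_erase t U k z)
      (hr.vacancy_nonneg t U z) hS
  have hlower : ((1 - r (W k, x)) * vacancy r (s.erase k) U x) *
      ((1 - r (W k, z)) * vacancy r (t.erase k) U z) ≤ vacancy r s W x * vacancy r t W z := by
    rw [herase s, herase t]
    exact mul_le_mul (hr.mul_erase_le_vacancy s W k x) (hr.mul_erase_le_vacancy t W k z)
      (mul_nonneg (sub_nonneg.mpr (hr.le_one _)) (hr.vacancy_nonneg _ W z))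
      (hr.vacancy_nonneg s W x)
  have hdrop : vacancy r (s.erase k) U x * (vacancy r (t.erase k) U z *
      (r (W k, x) + r (W k, z))) ≤ vacancy r (t.erase k) U z * (r (W k, x) + r (W k, z)) :=
    mul_le_of_le_one_left (mul_nonneg hT (add_nonneg ha hb)) hS1
  linarith [mul_nonneg (mul_nonneg hS hT) (mul_nonneg ha hb)]

variable [IsProbabilityMeasure ν] (hr : IsCoverKernel ν r θ)
include hr

theorem vacancy_mul_integral_sub_le (hUW : ∀ j ≠ k, U j = W j) (s t : Finset ι) (x y : X) :
    vacancy r s U x * ∫ z, vacancy r t U z * r (y, z) ∂ν -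
        vacancy r s W x * ∫ z, vacancy r t W z * r (y, z) ∂ν ≤
      θ * r (W k, x) + vacantOverlap ν r (t.erase k) U y (W k) := by
  have hU := (hr.integrable_vacancy_mul t U y).const_mul (vacancy r s U x)
  have hW := (hr.integrable_vacancy_mul t W y).const_mul (vacancy r s W x)
  have herase := (hr.integrable_vacancy_mul (t.erase k) U y).mul_const (r (W k, x))
  have hoverlap := hr.integrable_vacancy_mul_mul (t.erase k) U y (W k)
  calc vacancy r s U x * ∫ z, vacancy r t U z * r (y, z) ∂ν -
        vacancy r s W x * ∫ z, vacancy r t W z * r (y, z) ∂ν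
      ≤ ∫ z, (vacancy r (t.erase k) U z * r (y, z) * r (W k, x) +
          vacancy r (t.erase k) U z * (r (y, z) * r (W k, z))) ∂ν := by
        rw [← integral_const_mul, ← integral_const_mul, ← integral_sub hU hW]
        refine integral_mono (hU.sub hW) (herase.add hoverlap) fun z => ?_
        have := mul_le_mul_of_nonneg_right (hr.vacancy_mul_vacancy_sub_le hUW s t x z)
          (hr.nonneg (y, z))
        simp only
        linarith
    _ = (∫ z, vacancy r (t.erase k) U z * r (y, z) ∂ν) * r (W k, x) +
          vacantOverlap ν r (t.erase k) U y (W k) := by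
        rw [integral_add herase hoverlap, integral_mul_const, vacantOverlap]
    _ ≤ _ := by
        gcongr
        · exact hr.nonneg _
        · exact (hr.integral_vacancy_mul_mem_Icc _ U y).2

theorem vacancy_mul_increment_sub_le [Fintype ι] (s : Finset ι) {i : ι} (hik : i ≠ k) (u x y : X) :
    vacancy r s U x * (coverage ν r (Function.update U i y) - coverage ν r U) -
        vacancy r s (Function.update U k u) x *
          (coverage ν r (Function.update (Function.update U k u) i y) -
            coverage ν r (Function.update U k u)) ≤
      θ * (r (u, x) + r (U k, x)) + (vacantOverlap ν r ((Finset.univ.erase i).erase k) U y u +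
        vacantOverlap ν r ((Finset.univ.erase i).erase k) U (U i) (U k)) := by
  have hUW (j : ι) (hj : j ≠ k) : U j = Function.update U k u j :=
    (Function.update_of_ne hj u U).symm
  have hnew := hr.vacancy_mul_integral_sub_le hUW s (Finset.univ.erase i) x y
  have hold := hr.vacancy_mul_integral_sub_le (fun j hj => (hUW j hj).symm) s
    (Finset.univ.erase i) x (U i)
  have herase : vacantOverlap ν r ((Finset.univ.erase i).erase k) (Function.update U k u) (U i)
      (U k) = vacantOverlap ν r ((Finset.univ.erase i).erase k) U (U i) (U k) := by
    rw [vacantOverlap, vacantOverlap, vacancy_update (Finset.notMem_erase k _)]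
  rw [Function.update_self] at hnew
  rw [herase] at hold
  rw [hr.coverage_update_sub, hr.coverage_update_sub, Function.update_of_ne hik]
  linarith

end OneCoordinate

variable [IsProbabilityMeasure ν] (hr : IsCoverKernel ν r θ)
include hr

theorem integral_prod_mul_add {a b : X → ℝ} (ha : Integrable a ν) (hb : Integrable b ν) :
    ∫ w, r w * (a w.1 + b w.2) ∂ν.prod ν = θ * (∫ x, a x ∂ν + ∫ y, b y ∂ν) := by
  have hbound : ∀ᵐ w ∂ν.prod ν, ‖r w‖ ≤ 1 := ae_of_all _ hr.abs_le_one
  have hfst := (ha.comp_fst ν).bdd_mul hr.measurable.aestronglyMeasurable hbound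
  have hsnd := (hb.comp_snd ν).bdd_mul hr.measurable.aestronglyMeasurable hbound
  simp only [mul_add]
  rw [integral_add hfst hsnd, hr.integral_prod_mul_fst hfst, hr.integral_prod_mul_snd hsnd]

variable {n : ℕ} (U : Fin n → X) (u : X)

theorem integrable_coverage_increment (i : Fin n) :
    Integrable (fun w => r w * vacancy r (Finset.Ioi i) U w.1 *
      (coverage ν r (Function.update U i w.2) - coverage ν r U)) (ν.prod ν) :=
  hr.integrable_weight_mul _ U
    (integrable_increment hr.measurable_coverage hr.abs_coverage_le_one U i)

theorem integral_increment_sub_le {i k : Fin n} (hik : i ≠ k) :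
    ∫ w, r w * vacancy r (Finset.Ioi i) U w.1 *
          (coverage ν r (Function.update U i w.2) - coverage ν r U) ∂ν.prod ν -
        ∫ w, r w * vacancy r (Finset.Ioi i) (Function.update U k u) w.1 *
          (coverage ν r (Function.update (Function.update U k u) i w.2) -
            coverage ν r (Function.update U k u)) ∂ν.prod ν ≤
      3 * θ ^ 3 + θ * vacantOverlap ν r ((Finset.univ.erase i).erase k) U (U i) (U k) := by
  have hU := hr.integrable_coverage_increment U i
  have hW := hr.integrable_coverage_increment (Function.update U k u) i
  set s := (Finset.univ.erase i).erase k
  set c := vacantOverlap ν r s U (U i) (U k)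
  have hfst : Integrable (fun x => θ * (r (u, x) + r (U k, x))) ν :=
    ((hr.integrable_right u).add (hr.integrable_right (U k))).const_mul θ
  have hsnd : Integrable (fun y => vacantOverlap ν r s U y u + c) ν :=
    (hr.integrable_vacantOverlap s U u).add (integrable_const _)
  have hmajorant := ((hfst.comp_fst ν).add (hsnd.comp_snd ν)).bdd_mul
    hr.measurable.aestronglyMeasurable (ae_of_all _ hr.abs_le_one)
  rw [← integral_sub hU hW]
  calc _ ≤ ∫ w, r w * (θ * (r (u, w.1) + r (U k, w.1)) +
          (vacantOverlap ν r s U w.2 u + c)) ∂ν.prod ν := by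
        refine integral_mono (hU.sub hW) hmajorant fun w => ?_
        have := mul_le_mul_of_nonneg_left (hr.vacancy_mul_increment_sub_le (U := U)
          (Finset.Ioi i) hik u w.1 w.2) (hr.nonneg w)
        simp only
        linarith
    _ = θ * (θ * (θ + θ) + (∫ y, vacantOverlap ν r s U y u ∂ν + c)) := by
        rw [hr.integral_prod_mul_add hfst hsnd, integral_const_mul,
          integral_add (hr.integrable_right u) (hr.integrable_right (U k)), hr.integral_right,
          hr.integral_right, integral_add (hr.integrable_vacantOverlap s U u) (integrable_const _)]
        simp
    _ ≤ 3 * θ ^ 3 + θ * c := by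
        linarith [mul_le_mul_of_nonneg_left (hr.integral_vacantOverlap_le s U u) hr.theta_nonneg]

-- At `i = k` the resampled configurations coincide, so only the point being moved matters.
theorem integral_increment_sub_le_self (k : Fin n) :
    ∫ w, r w * vacancy r (Finset.Ioi k) U w.1 *
          (coverage ν r (Function.update U k w.2) - coverage ν r U) ∂ν.prod ν -
        ∫ w, r w * vacancy r (Finset.Ioi k) (Function.update U k u) w.1 *
          (coverage ν r (Function.update (Function.update U k u) k w.2) -
            coverage ν r (Function.update U k u)) ∂ν.prod ν ≤ θ ^ 2 := by
  rw [← integral_sub (hr.integrable_coverage_increment U k) (hr.integrable_coverage_increment _ k)]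
  calc _ ≤ ∫ w, r w * θ ∂ν.prod ν := by
        refine integral_mono ((hr.integrable_coverage_increment U k).sub
          (hr.integrable_coverage_increment _ k)) (hr.integrable_prod.mul_const θ) fun w => ?_
        have hk : k ∉ Finset.Ioi k := by
          simp only [Finset.mem_Ioi, lt_self_iff_false, not_false_eq_true]
        simp only [vacancy_update hk, Function.update_idem]
        have hmove : vacancy r (Finset.Ioi k) U w.1 *
            (coverage ν r (Function.update U k u) - coverage ν r U) ≤ θ :=
          (mul_le_mul_of_nonneg_left (abs_le.mp (hr.abs_coverage_update_sub_le U k u)).2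
            (hr.vacancy_nonneg _ U w.1)).trans
            (mul_le_of_le_one_left hr.theta_nonneg (hr.vacancy_le_one _ U w.1))
        linarith [mul_le_mul_of_nonneg_left hmove (hr.nonneg w)]
    _ = θ ^ 2 := by rw [integral_mul_const, hr.integral_prod_eq, sq]

theorem resampleDiff_coverage_sub_le (k : Fin n) :
    resampleDiff ν r θ (coverage ν r) U -
        resampleDiff ν r θ (coverage ν r) (Function.update U k u) ≤
      (3 * (1 - (1 - θ) ^ n) + 2) * θ ^ 2 := by
  have hθ := hr.theta_nonneg
  have hpow (i : ℕ) := hr.one_sub_theta_pow_mem_Icc i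
  simp only [resampleDiff, resampleSum]
  rw [← Finset.sum_sub_distrib, ← Finset.add_sum_erase _ _ (Finset.mem_univ k)]
  simp only [← mul_sub ((1 - θ) ^ _)]
  have hself := (mul_le_mul_of_nonneg_left (hr.integral_increment_sub_le_self U u k)
    (hpow k).1).trans (mul_le_of_le_one_left (sq_nonneg θ) (hpow k).2)
  have hne := Finset.sum_le_sum fun i (hi : i ∈ Finset.univ.erase k) =>
    (mul_le_mul_of_nonneg_left (hr.integral_increment_sub_le U u (Finset.ne_of_mem_erase hi))
      (hpow i).1).trans <| show _ ≤ 3 * θ ^ 2 * ((1 - θ) ^ (i : ℕ) * θ) +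
        θ * vacantOverlap ν r ((Finset.univ.erase i).erase k) U (U i) (U k) by
      linarith [mul_le_of_le_one_left (mul_nonneg hθ (hr.vacantOverlap_mem_Icc
        ((Finset.univ.erase i).erase k) U (U i) (U k)).1) (hpow i).2]
  rw [Finset.sum_add_distrib, ← Finset.mul_sum, ← Finset.mul_sum] at hne
  have hweights : ∑ i ∈ Finset.univ.erase k, (1 - θ) ^ (i : ℕ) * θ ≤ 1 - (1 - θ) ^ n := by
    rw [← sum_pow_mul_eq_one_sub_pow]
    exact Finset.sum_le_sum_of_subset_of_nonneg (Finset.erase_subset _ _)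
      fun i _ _ => mul_nonneg (hpow i).1 hθ
  linarith [mul_le_mul_of_nonneg_left (hr.sum_vacantOverlap_le U k) hθ,
    mul_le_mul_of_nonneg_left hweights (show 0 ≤ 3 * θ ^ 2 by positivity)]

end IsCoverKernel

end Differences

section CoverageLimit

variable {X : Type*} [MeasurableSpace X] {ν : Measure X} {r : X × X → ℝ} {θ : ℝ} {n : ℕ}

theorem exists_abs_comp_le_of_abs_le {Ω : Type*} {G : Ω → ℝ} {K : ℝ} (hK : ∀ ω, |G ω| ≤ K)
    {f : ℝ → ℝ} (hf : Continuous f) : ∃ C, ∀ ω, |f (G ω)| ≤ C := by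
  obtain ⟨C, hC⟩ := (isCompact_Icc (a := -K) (b := K)).exists_bound_of_continuousOn hf.continuousOn
  exact ⟨C, fun ω => hC _ (abs_le.mp (hK ω))⟩

theorem resampleDiff_sub_const_div (g : (Fin n → X) → ℝ) (c σ : ℝ) (U : Fin n → X) :
    resampleDiff ν r θ (fun U => (g U - c) / σ) U = resampleDiff ν r θ g U / σ := by
  simp only [resampleDiff, resampleSum, Finset.sum_div, ← sub_div, sub_sub_sub_cancel_right,
    ← mul_div_assoc, integral_div]

namespace IsCoverKernel

variable [IsProbabilityMeasure ν] (hr : IsCoverKernel ν r θ)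
include hr

theorem integrable_resampleDiff {g : (Fin n → X) → ℝ} (hg : Measurable g) {K : ℝ}
    (hK : ∀ U, |g U| ≤ K) : Integrable (resampleDiff ν r θ g) (Measure.pi fun _ => ν) :=
  integrable_of_abs_le (hr.measurable_resampleDiff hg) fun _ => hr.abs_resampleSum_le fun _ _ =>
    (abs_sub _ _).trans (add_le_add (hK _) (hK _))

theorem integral_coverage :
    ∫ U, coverage ν r U ∂Measure.pi (fun _ : Fin n => ν) = 1 - (1 - θ) ^ n := by
  have hmean := hr.integral_coverage_sub_mul (n := n) (g := fun _ => 1) measurable_const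
    fun _ => abs_one.le
  have hzero (U : Fin n → X) : resampleDiff ν r θ (fun _ => 1) U = 0 := by
    simp only [resampleDiff, resampleSum, sub_self, mul_zero, integral_zero, Finset.sum_const_zero]
  simp only [mul_one, hzero, integral_zero] at hmean
  rw [integral_sub hr.integrable_coverage (integrable_const _), integral_const, probReal_univ,
    one_smul] at hmean
  exact sub_eq_zero.mp hmean

theorem integral_resampleDiff_coverage :
    ∫ U, resampleDiff ν r θ (coverage ν r) U ∂Measure.pi (fun _ : Fin n => ν) =
      variance (coverage ν r) (Measure.pi fun _ : Fin n => ν) := by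
  have hsq : Integrable (fun U => coverage ν r U * coverage ν r U)
      (Measure.pi fun _ : Fin n => ν) := by
    simpa only [sq] using hr.memLp_coverage.integrable_sq
  rw [← hr.integral_coverage_sub_mul hr.measurable_coverage hr.abs_coverage_le_one,
    variance_eq_sub hr.memLp_coverage]
  have hmean := hr.integral_coverage (n := n)
  generalize 1 - (1 - θ) ^ n = p at hmean ⊢
  simp only [sub_mul, Pi.pow_apply, sq]
  rw [integral_sub hsq (hr.integrable_coverage.const_mul _), integral_const_mul,
    hmean]

theorem variance_coverage_le :
    variance (coverage ν r) (Measure.pi fun _ : Fin n => ν) ≤ (1 - (1 - θ) ^ n) * θ := by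
  rw [← hr.integral_resampleDiff_coverage]
  exact (le_abs_self _).trans
    (abs_integral_le_of_abs_le fun U => hr.abs_resampleDiff_coverage_le (n := n) U)

theorem integral_abs_resampleDiff_sub_variance_le :
    ∫ U, |resampleDiff ν r θ (coverage ν r) U -
        variance (coverage ν r) (Measure.pi fun _ : Fin n => ν)| ∂Measure.pi (fun _ : Fin n => ν) ≤
      √n * ((3 * (1 - (1 - θ) ^ n) + 2) * θ ^ 2 / 2) := by
  have hT := hr.measurable_resampleDiff (n := n) hr.measurable_coverage
  have hbound (U : Fin n → X) := hr.abs_resampleDiff_coverage_le U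
  have hL2 : MemLp (resampleDiff ν r θ (coverage ν r)) 2 (Measure.pi fun _ : Fin n => ν) :=
    .of_bound hT.aestronglyMeasurable _ (ae_of_all _ hbound)
  have hp := sub_nonneg.mpr (hr.one_sub_theta_pow_mem_Icc n).2
  simp only [← hr.integral_resampleDiff_coverage]
  refine (integral_abs_sub_integral_le_sqrt_variance hL2).trans ?_
  refine (Real.sqrt_le_sqrt (variance_pi_le_of_bounded_differences hT
    hbound fun U k u => hr.resampleDiff_coverage_sub_le U u k)).trans_eq ?_
  rw [Finset.sum_const, Finset.card_univ, Fintype.card_fin, nsmul_eq_mul,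
    Real.sqrt_mul (Nat.cast_nonneg n), Real.sqrt_sq (by positivity)]

theorem abs_resampleDiff_comp_sub_le {G : (Fin n → X) → ℝ} (hG : Measurable G) {K A : ℝ}
    (hK : ∀ U, |G U| ≤ K) (hA : ∀ U i y, |G (Function.update U i y) - G U| ≤ A) {f f' g : ℝ → ℝ}
    (hf : Continuous f) (htaylor : ∀ w t, |t| ≤ A → |f (w + t) - f w - t * f' w| ≤ g w)
    (U : Fin n → X) :
    |resampleDiff ν r θ (fun U => f (G U)) U - f' (G U) * resampleDiff ν r θ G U| ≤
      (1 - (1 - θ) ^ n) * g (G U) := by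
  obtain ⟨C, hC⟩ := exists_abs_comp_le_of_abs_le hK hf
  have hfG : Measurable fun U => f (G U) := hf.measurable.comp hG
  rw [resampleDiff, resampleDiff, ← hr.resampleSum_sub_mul
    (fun i => integrable_increment hfG hC U i)
    fun i => integrable_increment hG hK U i]
  refine hr.abs_resampleSum_le fun i w => ?_
  simpa only [add_sub_cancel, mul_comm] using htaylor (G U) _ (hA U i w.2)

theorem measurable_standardized_coverage (c σ : ℝ) :
    Measurable fun U : Fin n → X => (coverage ν r U - c) / σ :=
  (hr.measurable_coverage.sub_const c).div_const σ

section Standardized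

variable {σ : ℝ} (hσ : 0 < σ) (c : ℝ)
include hσ

theorem abs_standardized_coverage_le (U : Fin n → X) :
    |(coverage ν r U - c) / σ| ≤ (1 + |c|) / σ := by
  rw [abs_div, abs_of_pos hσ]
  gcongr
  exact (abs_sub _ _).trans (add_le_add_left (hr.abs_coverage_le_one U) _)

theorem abs_standardized_coverage_update_sub_le (U : Fin n → X) (i : Fin n) (y : X) :
    |(coverage ν r (Function.update U i y) - c) / σ - (coverage ν r U - c) / σ| ≤ θ / σ := by
  rw [← sub_div, sub_sub_sub_cancel_right, abs_div, abs_of_pos hσ]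
  gcongr
  exact hr.abs_coverage_update_sub_le U i y

-- The Taylor remainder bounds `N - f'(W) T`, where `N` and `T` are the total increments of `f(W)`
-- and `W`, and the fluctuations of `T` about its mean bound the rest.
theorem abs_deriv_sub_resampleDiff_div_le {f f' g : ℝ → ℝ} (hf : Continuous f)
    (hf'1 : ∀ w, |f' w| ≤ 1)
    (htaylor : ∀ w t, |t| ≤ θ / σ → |f (w + t) - f w - t * f' w| ≤ g w) (U : Fin n → X) :
    |f' ((coverage ν r U - c) / σ) -
        resampleDiff ν r θ (fun U => f ((coverage ν r U - c) / σ)) U / σ| ≤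
      |resampleDiff ν r θ (coverage ν r) U - σ ^ 2| / σ ^ 2 +
        (1 - (1 - θ) ^ n) / σ * g ((coverage ν r U - c) / σ) := by
  have hremainder := hr.abs_resampleDiff_comp_sub_le (hr.measurable_standardized_coverage c σ)
    (hr.abs_standardized_coverage_le hσ c)
    (hr.abs_standardized_coverage_update_sub_le hσ c) hf htaylor U
  rw [resampleDiff_sub_const_div] at hremainder
  set w := (coverage ν r U - c) / σ
  set T := resampleDiff ν r θ (coverage ν r) U
  set N := resampleDiff ν r θ (fun U => f ((coverage ν r U - c) / σ)) U
  calc |f' w - N / σ|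
      = |(T - σ ^ 2) / σ ^ 2 * f' w + (N - f' w * (T / σ)) / σ| := by
        rw [abs_sub_comm]
        congr 1
        field_simp
        ring
    _ ≤ |(T - σ ^ 2) / σ ^ 2 * f' w| + |(N - f' w * (T / σ)) / σ| := abs_add_le _ _
    _ ≤ |T - σ ^ 2| / σ ^ 2 + (1 - (1 - θ) ^ n) * g w / σ := by
        rw [abs_mul, abs_div, abs_div _ σ, abs_of_pos hσ, abs_of_pos (pow_pos hσ 2)]
        exact add_le_add (mul_le_of_le_one_right (by positivity) (hf'1 _)) (by gcongr)
    _ = _ := by rw [div_mul_eq_mul_div (1 - (1 - θ) ^ n)]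

theorem approxSteinIdentity_coverage
    (hvar : variance (coverage ν r) (Measure.pi fun _ : Fin n => ν) = σ ^ 2) :
    ApproxSteinIdentity (Measure.pi fun _ : Fin n => ν)
      (fun U => (coverage ν r U - (1 - (1 - θ) ^ n)) / σ) (θ / σ)
      (√n * ((3 * (1 - (1 - θ) ^ n) + 2) * θ ^ 2 / 2) / σ ^ 2) ((1 - (1 - θ) ^ n) / σ) := by
  intro f f' g hf hf' hf'1 _ hg htaylor
  set P := Measure.pi fun _ : Fin n => ν
  set p := 1 - (1 - θ) ^ n
  set W : (Fin n → X) → ℝ := fun U => (coverage ν r U - p) / σ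
  set T := resampleDiff (n := n) ν r θ (coverage ν r)
  set N := resampleDiff ν r θ fun U => f (W U)
  have hfc : Continuous f := continuous_iff_continuousAt.mpr fun x => (hf x).continuousAt
  have hW : Measurable W := hr.measurable_standardized_coverage p σ
  have hWK := hr.abs_standardized_coverage_le (n := n) hσ p
  obtain ⟨C, hC⟩ := exists_abs_comp_le_of_abs_le hWK hfc
  have hfW : Measurable fun U => f (W U) := hfc.measurable.comp hW
  have hN : Integrable N P := hr.integrable_resampleDiff hfW hC
  have hT : Integrable T P :=
    hr.integrable_resampleDiff hr.measurable_coverage hr.abs_coverage_le_one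
  have hf'W : Integrable (fun U => f' (W U)) P :=
    integrable_of_abs_le (hf'.measurable.comp hW) fun U => hf'1 (W U)
  have hWf : Integrable (fun U => W U * f (W U)) P :=
    (integrable_of_abs_le hfW hC).bdd_mul hW.aestronglyMeasurable (ae_of_all _ hWK)
  have hfluctuation : Integrable (fun U => |T U - σ ^ 2| / σ ^ 2) P :=
    ((hT.sub (integrable_const _)).abs).div_const _
  have hremainder := hg.const_mul (p / σ)
  have hmajorant : Integrable (fun U => |T U - σ ^ 2| / σ ^ 2 + p / σ * g (W U)) P :=
    hfluctuation.add hremainder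
  have hexchange : ∫ U, W U * f (W U) ∂P = ∫ U, N U / σ ∂P := by
    rw [integral_div, ← hr.integral_coverage_sub_mul hfW hC, ← integral_div]
    exact integral_congr_ae (ae_of_all _ fun U => div_mul_eq_mul_div _ _ _)
  calc |∫ U, (f' (W U) - W U * f (W U)) ∂P| = |∫ U, (f' (W U) - N U / σ) ∂P| := by
        rw [integral_sub hf'W hWf, hexchange, integral_sub hf'W (hN.div_const σ)]
    _ ≤ ∫ U, (|T U - σ ^ 2| / σ ^ 2 + p / σ * g (W U)) ∂P := by
        rw [← Real.norm_eq_abs]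
        exact norm_integral_le_of_norm_le hmajorant
          (ae_of_all _ (hr.abs_deriv_sub_resampleDiff_div_le hσ p hfc hf'1 htaylor))
    _ = (∫ U, |T U - σ ^ 2| ∂P) / σ ^ 2 + p / σ * ∫ U, g (W U) ∂P := by
        rw [integral_add hfluctuation hremainder, integral_div, integral_const_mul]
    _ ≤ _ := by
        have hT_near := hr.integral_abs_resampleDiff_sub_variance_le (n := n)
        rw [hvar] at hT_near
        gcongr

end Standardized

theorem kolDist_coverage_le
    (hvar : 0 < variance (coverage ν r) (Measure.pi fun _ : Fin n => ν)) {σ : ℝ}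
    (hσ : σ = √(variance (coverage ν r) (Measure.pi fun _ : Fin n => ν))) :
    kolDist (Measure.pi fun _ : Fin n => ν) (coverage ν r) ≤
      (1 / 5) * (√(11 * ((1 - (1 - θ) ^ n) / σ * (θ / σ) ^ 2) +
        5 * (√n * ((3 * (1 - (1 - θ) ^ n) + 2) * θ ^ 2 / 2) / σ ^ 2)) +
          2 * √((1 - (1 - θ) ^ n) / σ * (θ / σ) ^ 2)) ^ 2 := by
  have hσ0 : 0 < σ := hσ ▸ Real.sqrt_pos.mpr hvar
  have hsq : variance (coverage ν r) (Measure.pi fun _ : Fin n => ν) = σ ^ 2 := by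
    rw [hσ, Real.sq_sqrt hvar.le]
  have hvar_le := hr.variance_coverage_le (n := n)
  have hp := sub_nonneg.mpr (hr.one_sub_theta_pow_mem_Icc n).2
  have hθ : 0 < θ := pos_of_mul_pos_right (hvar.trans_le hvar_le) hp
  have hW := hr.measurable_standardized_coverage (n := n) (1 - (1 - θ) ^ n) σ
  have hmean_abs : ∫ U, |(coverage ν r U - (1 - (1 - θ) ^ n)) / σ|
      ∂Measure.pi (fun _ : Fin n => ν) ≤ 1 := by
    have := integral_abs_sub_integral_le_sqrt_variance
      (hr.memLp_coverage (ι := Fin n) (P := Measure.pi fun _ => ν) (p := 2))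
    rw [hr.integral_coverage, ← hσ] at this
    simp only [abs_div, abs_of_pos hσ0]
    rwa [integral_div, div_le_one hσ0]
  have hκ : 1 ≤ (1 - (1 - θ) ^ n) / σ * (θ / σ) := by
    rw [div_mul_div_comm, one_le_div (by positivity), ← sq, ← hsq]
    exact hvar_le
  rw [kolDist, hr.integral_coverage, ← hσ]
  exact iSup_abs_cdf_sub_le hW
    (integrable_of_abs_le hW (hr.abs_standardized_coverage_le hσ0 _)) hmean_abs
    (div_pos hθ hσ0) hκ (by positivity) (hr.approxSteinIdentity_coverage hσ0 hsq)

end IsCoverKernel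

end CoverageLimit

section Scaling

theorem kolDist_const_mul {Ω : Type*} [MeasurableSpace Ω] (P : Measure Ω) (X : Ω → ℝ) {c : ℝ}
    (hc : 0 < c) : kolDist P (fun ω => c * X ω) = kolDist P X := by
  simp only [kolDist, integral_const_mul, variance_const_mul, Real.sqrt_mul (sq_nonneg c),
    Real.sqrt_sq hc.le, ← mul_sub, mul_div_mul_left _ _ hc.ne']

theorem natCast_mul_le_one_sub_pow_mul {θ : ℝ} (h0 : 0 ≤ θ) (h1 : θ ≤ 1) (n : ℕ) :
    n * θ ≤ (1 - (1 - θ) ^ n) * (1 + n * θ) := by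
  have hvacant : 0 ≤ (1 - θ) ^ n := pow_nonneg (sub_nonneg.mpr h1) n
  have hbernoulli : 1 + n * θ ≤ (1 + θ) ^ n := one_add_mul_le_pow (by linarith) n
  have hprod : (1 - θ) ^ n * (1 + θ) ^ n ≤ 1 := by
    rw [← mul_pow]
    exact pow_le_one₀ (by nlinarith) (by nlinarith)
  linarith [mul_le_mul_of_nonneg_left hbernoulli hvacant]

theorem sq_mul_three_mul_add_two_le {x p φ : ℝ} (hx : 0 ≤ x) (hp : 0 ≤ p)
    (hpx : x ≤ p * (1 + x)) (hxφ : x ≤ φ) :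
    (3 * p + 2) * x ^ 2 / 2 ≤ p * (φ * (5 / 2 * φ + 1)) := by
  have hφ := hx.trans hxφ
  calc (3 * p + 2) * x ^ 2 / 2 = x * (x + 3 / 2 * (p * x)) := by ring
    _ ≤ x * (p * (5 / 2 * x + 1)) := by gcongr; linarith
    _ = p * (x * (5 / 2 * x + 1)) := by ring
    _ ≤ p * (φ * (5 / 2 * φ + 1)) := by gcongr

theorem sq_sqrt_add_two_mul_sqrt_le {κ q a b c : ℝ} (hc : 0 ≤ c) (hκ : κ ≤ c * a)
    (hq : q ≤ c * b) :
    (√(11 * κ + 5 * q) + 2 * √κ) ^ 2 ≤ c * (√(11 * a + 5 * b) + 2 * √a) ^ 2 :=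
  calc (√(11 * κ + 5 * q) + 2 * √κ) ^ 2
      ≤ (√(c * (11 * a + 5 * b)) + 2 * √(c * a)) ^ 2 := by gcongr; linarith
    _ = √c ^ 2 * (√(11 * a + 5 * b) + 2 * √a) ^ 2 := by
      rw [Real.sqrt_mul hc, Real.sqrt_mul hc]
      ring
    _ = c * (√(11 * a + 5 * b) + 2 * √a) ^ 2 := by rw [Real.sq_sqrt hc]

theorem sq_sqrt_add_two_mul_sqrt_le_of_rescale {m σ θ p φ : ℝ} (hm : 0 < m) (hσ : 0 < σ)
    (hp : 0 ≤ p) (hθ : 0 ≤ θ) (hpθ : m * θ ≤ p * (1 + m * θ)) (hφ : m * θ ≤ φ) :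
    (√(11 * (p / σ * (θ / σ) ^ 2) + 5 * (√m * ((3 * p + 2) * θ ^ 2 / 2) / σ ^ 2)) +
        2 * √(p / σ * (θ / σ) ^ 2)) ^ 2 ≤
      m * p / (m * σ) ^ 2 *
        (√(11 * φ ^ 2 / (m * σ) + 5 * (φ * (5 / 2 * φ + 1)) / √m) + 2 * φ / √(m * σ)) ^ 2 := by
  have hmθ : 0 ≤ m * θ := mul_nonneg hm.le hθ
  have hκ : p / σ * (θ / σ) ^ 2 ≤ m * p / (m * σ) ^ 2 * (φ ^ 2 / (m * σ)) :=
    calc p / σ * (θ / σ) ^ 2 = m * p / (m * σ) ^ 2 * ((m * θ) ^ 2 / (m * σ)) := by field_simp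
      _ ≤ m * p / (m * σ) ^ 2 * (φ ^ 2 / (m * σ)) := by gcongr
  have hq : √m * ((3 * p + 2) * θ ^ 2 / 2) / σ ^ 2 ≤
      m * p / (m * σ) ^ 2 * (φ * (5 / 2 * φ + 1) / √m) :=
    calc √m * ((3 * p + 2) * θ ^ 2 / 2) / σ ^ 2
        = √m / (m * σ) ^ 2 * ((3 * p + 2) * (m * θ) ^ 2 / 2) := by field_simp
      _ ≤ √m / (m * σ) ^ 2 * (p * (φ * (5 / 2 * φ + 1))) := by
        gcongr
        exact sq_mul_three_mul_add_two_le hmθ hp hpθ hφ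
      _ = m / √m / (m * σ) ^ 2 * (p * (φ * (5 / 2 * φ + 1))) := by rw [Real.div_sqrt]
      _ = m * p / (m * σ) ^ 2 * (φ * (5 / 2 * φ + 1) / √m) := by ring
  refine (sq_sqrt_add_two_mul_sqrt_le (by positivity) hκ hq).trans_eq ?_
  rw [Real.sqrt_div' _ (by positivity), Real.sqrt_sq (hmθ.trans hφ), ← mul_div_assoc 11,
    ← mul_div_assoc 5, ← mul_div_assoc 2]

theorem IsCoverKernel.kolDist_natCast_mul_coverage_le {X : Type*} [MeasurableSpace X]
    {ν : Measure X} [IsProbabilityMeasure ν] {r : X × X → ℝ} {θ φ : ℝ} {n : ℕ}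
    (hr : IsCoverKernel ν r θ) (hφ : n * θ ≤ φ) {P : Measure (Fin n → X)}
    (hP : P = Measure.pi fun _ => ν) {V : (Fin n → X) → ℝ} (hV : ∀ U, V U = n * coverage ν r U)
    (hvar : 0 < variance V P) :
    kolDist P V ≤ (∫ U, V U ∂P) / (5 * variance V P) *
      (√(11 * φ ^ 2 / √(variance V P) + 5 * (φ * (5 / 2 * φ + 1)) / √n) +
        2 * φ / √(√(variance V P))) ^ 2 := by
  obtain rfl := funext hV
  subst hP
  set P := Measure.pi fun _ : Fin n => ν
  have hvar_mul := variance_const_mul (n : ℝ) (coverage ν r) P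
  have hn : 0 < (n : ℝ) := n.cast_nonneg.lt_of_ne' fun h =>
    hvar.ne' (by rw [hvar_mul, h, zero_pow two_ne_zero, zero_mul])
  have hvar_coverage : 0 < variance (coverage ν r) P :=
    pos_of_mul_pos_right (hvar_mul ▸ hvar) (sq_nonneg _)
  have hbound := hr.kolDist_coverage_le hvar_coverage rfl
  set σ := √(variance (coverage ν r) P) with hσ
  have hvar_eq : variance (fun U => n * coverage ν r U) P = (n * σ) ^ 2 := by
    rw [hvar_mul, mul_pow, hσ, Real.sq_sqrt hvar_coverage.le]
  have hσ_pos : 0 < σ := Real.sqrt_pos.mpr hvar_coverage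
  have hrescale := sq_sqrt_add_two_mul_sqrt_le_of_rescale hn hσ_pos
    (sub_nonneg.mpr (hr.one_sub_theta_pow_mem_Icc n).2) hr.theta_nonneg
    (natCast_mul_le_one_sub_pow_mul hr.theta_nonneg hr.theta_mem_Icc.2 n) hφ
  rw [kolDist_const_mul _ _ hn, hvar_eq, Real.sqrt_sq (by positivity), integral_const_mul,
    hr.integral_coverage]
  refine (hbound.trans (mul_le_mul_of_nonneg_left hrescale (by norm_num))).trans_eq ?_
  ring

end Scaling

section Torus

variable {d : ℕ} {L : ℝ}

theorem iInf_abs_sub_intCast_mul (u : ℝ) : (⨅ k : ℤ, |u - k * L|) = ‖(u : AddCircle L)‖ := by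
  refine le_antisymm ?_ (le_ciInf fun k => ?_)
  · rw [AddCircle.norm_eq]
    exact ciInf_le ⟨0, forall_mem_range.mpr fun k : ℤ => abs_nonneg (u - k * L)⟩ _
  · have hperiod : ((u - k * L : ℝ) : AddCircle L) = u := by
      rw [AddCircle.coe_sub, (AddCircle.coe_eq_zero_iff L).mpr ⟨k, zsmul_eq_mul L k⟩, sub_zero]
    rw [← hperiod]
    exact QuotientAddGroup.norm_mk_le_norm

theorem torDist_eq_sqrt (x y : Fin d → ℝ) :
    torDist L x y = √(∑ i, ‖(x i : AddCircle L) - (y i : AddCircle L)‖ ^ 2) := by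
  simp only [torDist, iInf_abs_sub_intCast_mul, AddCircle.coe_sub]

theorem torDist_comm (x y : Fin d → ℝ) : torDist L x y = torDist L y x := by
  simp only [torDist_eq_sqrt, norm_sub_rev]

theorem continuous_torDist :
    Continuous fun p : (Fin d → ℝ) × (Fin d → ℝ) => torDist L p.1 p.2 := by
  have := AddCircle.continuous_mk' L
  simp only [torDist_eq_sqrt]
  fun_prop

theorem measurableSet_torDist_le (x : Fin d → ℝ) (ρ : ℝ) : MeasurableSet {y | torDist L x y ≤ ρ} :=
  (isClosed_le (continuous_torDist.comp (Continuous.prodMk_right x))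
    continuous_const).measurableSet

/-- The coordinatewise quotient map from `ℝ^d` onto the flat torus of side `L`. -/
def toTorus (d : ℕ) (L : ℝ) (y : Fin d → ℝ) : Fin d → AddCircle L := fun i => y i

/-- The Euclidean ball of radius `ρ` about the origin of the flat torus of side `L`. -/
def torusBall (d : ℕ) (L ρ : ℝ) : Set (Fin d → AddCircle L) := {b | √(∑ i, ‖b i‖ ^ 2) ≤ ρ}

theorem torDist_le_iff (x y : Fin d → ℝ) (ρ : ℝ) :
    torDist L x y ≤ ρ ↔ toTorus d L y - toTorus d L x ∈ torusBall d L ρ := by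
  rw [torDist_comm, torDist_eq_sqrt]
  rfl

theorem measurableSet_torusBall (ρ : ℝ) : MeasurableSet (torusBall d L ρ) :=
  (isClosed_le (by fun_prop) continuous_const).measurableSet

theorem box_ae_eq_Ioc :
    box d L =ᵐ[volume] (univ.pi fun _ => Ioc 0 (0 + L) : Set (Fin d → ℝ)) := by
  rw [zero_add]
  exact Measure.univ_pi_Ico_ae_eq_Icc.trans Measure.univ_pi_Ioc_ae_eq_Icc.symm

variable [hL : Fact (0 < L)]

theorem measurePreserving_toTorus (a : ℝ) :
    MeasurePreserving (toTorus d L)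
      (volume.restrict (univ.pi fun _ => Ioc a (a + L))) volume := by
  have hcoord := measurePreserving_pi (fun _ : Fin d => volume.restrict (Ioc a (a + L)))
    (fun _ => (volume : Measure (AddCircle L))) fun _ => AddCircle.measurePreserving_mk L a
  rwa [← Measure.restrict_pi_pi] at hcoord

theorem volume_restrict_box_torDist_le (x : Fin d → ℝ) (ρ : ℝ) :
    volume.restrict (box d L) {y | torDist L x y ≤ ρ} = volume (torusBall d L ρ) := by
  have hshift := (measurePreserving_sub_right volume (toTorus d L x)).comp
    (measurePreserving_toTorus (d := d) (L := L) 0)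
  rw [Measure.restrict_congr_set box_ae_eq_Ioc,
    ← hshift.measure_preimage (measurableSet_torusBall ρ).nullMeasurableSet]
  simp only [torDist_le_iff]
  rfl

theorem phi_eq_volume_real_closedBall {ρ : ℝ} (hρ : 0 ≤ ρ) :
    phi d ρ = volume.real (closedBall (0 : EuclideanSpace ℝ (Fin d)) ρ) := by
  rw [Measure.addHaar_real_closedBall' _ _ hρ, finrank_euclideanSpace_fin, mul_comm]
  rfl

theorem norm_toTorus_apply {y : Fin d → ℝ}
    (hy : y ∈ univ.pi fun _ => Ioc (-(L / 2)) (-(L / 2) + L)) (i : Fin d) :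
    ‖toTorus d L y i‖ = |y i| := by
  obtain ⟨hlo, hhi⟩ := hy i (mem_univ i)
  refine (AddCircle.norm_coe_eq_abs_iff L hL.out.ne').mpr ?_
  rw [abs_of_pos hL.out, abs_le]
  constructor <;> linarith

theorem volume_real_torusBall_le_phi {ρ : ℝ} (hρ : 0 ≤ ρ) :
    volume.real (torusBall d L ρ) ≤ phi d ρ := by
  have hchart := measurePreserving_toTorus (d := d) (L := L) (-(L / 2))
  have hball := measurableSet_torusBall (d := d) (L := L) ρ
  rw [phi_eq_volume_real_closedBall hρ]
  refine ENNReal.toReal_mono measure_closedBall_lt_top.ne ?_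
  rw [← hchart.measure_preimage hball.nullMeasurableSet,
    ← (PiLp.volume_preserving_toLp (Fin d)).measure_preimage
      measurableSet_closedBall.nullMeasurableSet, Measure.restrict_apply (hchart.measurable hball)]
  refine measure_mono fun y hy => ?_
  have hnorm : √(∑ i, ‖toTorus d L y i‖ ^ 2) ≤ ρ := hy.1
  simp only [norm_toTorus_apply hy.2] at hnorm
  rwa [mem_preimage, mem_closedBall_zero_iff, EuclideanSpace.norm_eq]

end Torus

section UniformBox

variable {d : ℕ} {L : ℝ}

theorem uniformBox_real_apply (hL : 0 ≤ L) (s : Set (Fin d → ℝ)) :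
    (uniformBox d L).real s = (L ^ d)⁻¹ * (volume.restrict (box d L)).real s := by
  rw [uniformBox, measureReal_nnreal_smul_apply, NNReal.coe_inv, NNReal.coe_pow,
    Real.coe_toNNReal L hL]

theorem volume_real_box (hL : 0 ≤ L) : volume.real (box d L) = L ^ d := by
  rw [measureReal_def, box, volume_pi_pi]
  simp [hL]

/-- The indicator of the pairs of points of `ℝ^d` at toroidal distance at most `ρ`. -/
def torBallKernel (d : ℕ) (L ρ : ℝ) (p : (Fin d → ℝ) × (Fin d → ℝ)) : ℝ :=
  if torDist L p.1 p.2 ≤ ρ then 1 else 0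

variable [hL : Fact (0 < L)]

instance isProbabilityMeasure_uniformBox : IsProbabilityMeasure (uniformBox d L) := by
  refine isProbabilityMeasure_iff_real.mpr ?_
  rw [uniformBox_real_apply hL.out.le, measureReal_restrict_apply_univ,
    volume_real_box hL.out.le, inv_mul_cancel₀ (pow_pos hL.out d).ne']

theorem isCoverKernel_torBallKernel (ρ : ℝ) :
    IsCoverKernel (uniformBox d L) (torBallKernel d L ρ)
      ((L ^ d)⁻¹ * volume.real (torusBall d L ρ)) where
  measurable := Measurable.ite (isClosed_le continuous_torDist continuous_const).measurableSet
    measurable_const measurable_const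
  nonneg p := by unfold torBallKernel; split_ifs <;> norm_num
  le_one p := by unfold torBallKernel; split_ifs <;> norm_num
  symm x y := by simp only [torBallKernel, torDist_comm]
  integral_right x := by
    have hindicator : (fun y => torBallKernel d L ρ (x, y)) =
        indicator {y | torDist L x y ≤ ρ} 1 := by
      ext y
      simp only [torBallKernel, indicator_apply, Set.mem_ofPred_eq, Pi.one_apply]
    rw [hindicator, integral_indicator_one (measurableSet_torDist_le x ρ),
      uniformBox_real_apply hL.out.le, measureReal_def, volume_restrict_box_torDist_le,
      measureReal_def]

theorem coverage_torBallKernel {n : ℕ} (ρ : ℝ) (ω : Fin n → Fin d → ℝ) :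
    coverage (uniformBox d L) (torBallKernel d L ρ) ω =
      (uniformBox d L).real (⋃ i, {y | torDist L (ω i) y ≤ ρ}) := by
  have hmeas : MeasurableSet (⋃ i, {y | torDist L (ω i) y ≤ ρ}) :=
    MeasurableSet.iUnion fun i => measurableSet_torDist_le (ω i) ρ
  have hvacancy : vacancy (torBallKernel d L ρ) Finset.univ ω =
      indicator (⋃ i, {y | torDist L (ω i) y ≤ ρ})ᶜ 1 := by
    ext z
    by_cases hz : ∃ i, torDist L (ω i) z ≤ ρ
    · obtain ⟨i, hi⟩ := hz
      rw [indicator_of_notMem (notMem_compl_iff.mpr (mem_iUnion.mpr ⟨i, hi⟩))]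
      exact Finset.prod_eq_zero (Finset.mem_univ i) (by simp [torBallKernel, hi])
    · rw [indicator_of_mem (by simpa using hz)]
      push Not at hz
      exact Finset.prod_eq_one fun i _ => by simp [torBallKernel, hz i]
  rw [coverage, hvacancy, integral_indicator_one hmeas.compl, probReal_compl_eq_one_sub hmeas,
    sub_sub_cancel]

theorem volume_real_iUnion_torBall {n : ℕ} (ρ : ℝ) (ω : Fin n → Fin d → ℝ) :
    volume.real (⋃ i, torBall L (ω i) ρ) =
      L ^ d * coverage (uniformBox d L) (torBallKernel d L ρ) ω := by
  have hinter : ⋃ i, torBall L (ω i) ρ = (⋃ i, {y | torDist L (ω i) y ≤ ρ}) ∩ box d L := by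
    rw [inter_comm, inter_iUnion]
    rfl
  rw [coverage_torBallKernel, uniformBox_real_apply hL.out.le, measureReal_restrict_apply
    (MeasurableSet.iUnion fun i => measurableSet_torDist_le (ω i) ρ), hinter,
    mul_inv_cancel_left₀ (pow_pos hL.out d).ne']

end UniformBox

section CoveredVolume

variable {d : ℕ} {ρ : ℝ}

theorem sideLen_pow (hd : 1 ≤ d) (n : ℕ) : sideLen d n ^ d = n :=
  Real.rpow_inv_natCast_pow n.cast_nonneg (Nat.one_le_iff_ne_zero.mp hd)

theorem sideLen_pos {n : ℕ} (hn : 0 < n) : 0 < sideLen d n :=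
  Real.rpow_pos_of_pos (Nat.cast_pos.mpr hn) _

theorem phi_nonneg (hρ : 0 ≤ ρ) : 0 ≤ phi d ρ :=
  mul_nonneg ENNReal.toReal_nonneg (pow_nonneg hρ d)

theorem two_mul_sub_div_sub_nonneg {a b : ℝ} (hb : 0 ≤ b) (hab : a ≤ b) :
    0 ≤ (2 * b - a) / (b - a) :=
  div_nonneg (by linarith) (sub_nonneg.mpr hab)

theorem two_mul_sq_mul_sq_le_etaV {n : ℕ} (hd : 1 ≤ d) (hρ : 0 ≤ ρ) (hphi : 6 ^ d * phi d ρ ≤ n) :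
    2 * phi d ρ ^ 2 * ((3 ^ d + 1) * phi d ρ + 1) ^ 2 ≤ etaV d n ρ := by
  have hφ : 0 ≤ phi d ρ := phi_nonneg hρ
  have hratio_six := two_mul_sub_div_sub_nonneg n.cast_nonneg hphi
  have hratio_two : 0 ≤ (2 * n - 3 * 2 ^ d * phi d ρ) / (n - 3 * 2 ^ d * phi d ρ) := by
    refine two_mul_sub_div_sub_nonneg n.cast_nonneg (le_trans ?_ hphi)
    rw [show (6 : ℝ) = 3 * 2 by norm_num, mul_pow]
    gcongr
    exact le_self_pow₀ (by norm_num) (Nat.one_le_iff_ne_zero.mp hd)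
  refine le_add_of_le_of_nonneg (le_mul_of_one_le_right (by positivity) ?_) (by positivity)
  rw [add_assoc]
  exact le_add_of_nonneg_right (by positivity)

theorem phi_mul_le_sqrt_etaV {n : ℕ} (hd : 1 ≤ d) (hρ : 0 ≤ ρ) (hphi : 6 ^ d * phi d ρ ≤ n) :
    phi d ρ * (5 / 2 * phi d ρ + 1) ≤ √(etaV d n ρ) := by
  have hφ : 0 ≤ phi d ρ := phi_nonneg hρ
  have h3 : (1 : ℝ) ≤ 3 ^ d := one_le_pow₀ (by norm_num)
  refine Real.le_sqrt_of_sq_le (le_trans ?_ (two_mul_sq_mul_sq_le_etaV hd hρ hphi))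
  calc (phi d ρ * (5 / 2 * phi d ρ + 1)) ^ 2
      ≤ 2 * phi d ρ ^ 2 * ((1 + 1) * phi d ρ + 1) ^ 2 := by
        rw [mul_pow, mul_comm (2 : ℝ), mul_assoc]
        gcongr
        nlinarith
    _ ≤ 2 * phi d ρ ^ 2 * ((3 ^ d + 1) * phi d ρ + 1) ^ 2 := by gcongr

theorem coveredVol_eq_mul_coverage {n : ℕ} [Fact (0 < sideLen d n)] (hd : 1 ≤ d)
    (ω : Fin n → Fin d → ℝ) :
    coveredVol d n ρ ω =
      n * coverage (uniformBox d (sideLen d n)) (torBallKernel d (sideLen d n) ρ) ω := by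
  rw [← sideLen_pow hd n]
  exact volume_real_iUnion_torBall ρ ω

end CoveredVolume

theorem covered_volume_normal_approximation_general
    (d n : ℕ) (hd : 1 ≤ d) (ρ : ℝ) (hρ : 0 ≤ ρ)
    (hvar : 0 < variance (coveredVol d n ρ) (binppLaw d n)) :
    kolDist (binppLaw d n) (coveredVol d n ρ) ≤
      (∫ ω, coveredVol d n ρ ω ∂binppLaw d n) /
          (5 * variance (coveredVol d n ρ) (binppLaw d n)) *
        (√(11 * phi d ρ ^ 2 / √(variance (coveredVol d n ρ) (binppLaw d n)) +
              5 * (phi d ρ * (5 / 2 * phi d ρ + 1)) / √n) +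
          2 * phi d ρ / √(√(variance (coveredVol d n ρ) (binppLaw d n)))) ^ 2 := by
  have hn : 0 < n := Nat.pos_of_ne_zero <| by
    rintro rfl
    have hzero : coveredVol d 0 ρ = 0 := by
      ext ω
      simp [coveredVol]
    exact hvar.ne' (by rw [hzero, variance_zero])
  have : Fact (0 < sideLen d n) := ⟨sideLen_pos hn⟩
  refine (isCoverKernel_torBallKernel ρ).kolDist_natCast_mul_coverage_le ?_ rfl
    (coveredVol_eq_mul_coverage hd) hvar
  rw [sideLen_pow hd, mul_inv_cancel_left₀ (Nat.cast_pos.mpr hn).ne']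
  exact volume_real_torusBall_le_phi hρ

/-- Theorem 2.1 (Goldstein–Penrose): normal approximation for the covered volume. -/
theorem covered_volume_normal_approximation
    (d n : ℕ) (hd : 1 ≤ d) (hn : 4 ≤ n) (ρ : ℝ) (hρ : 0 < ρ)
    (hphi : 6 ^ d * phi d ρ < n)
    (hvar : 0 < variance (coveredVol d n ρ) (binppLaw d n)) :
    kolDist (binppLaw d n) (coveredVol d n ρ) ≤
      (∫ ω, coveredVol d n ρ ω ∂binppLaw d n) /
          (5 * variance (coveredVol d n ρ) (binppLaw d n)) *
        (Real.sqrt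
            (11 * phi d ρ ^ 2 / Real.sqrt (variance (coveredVol d n ρ) (binppLaw d n)) +
              5 * Real.sqrt (etaV d n ρ) / Real.sqrt n) +
          2 * phi d ρ /
            Real.sqrt (Real.sqrt (variance (coveredVol d n ρ) (binppLaw d n)))) ^ 2 := by
  have hmean : 0 ≤ ∫ ω, coveredVol d n ρ ω ∂binppLaw d n :=
    integral_nonneg fun ω => ENNReal.toReal_nonneg
  have hφ : 0 ≤ phi d ρ := phi_nonneg hρ.le
  refine (covered_volume_normal_approximation_general d n hd ρ hρ.le hvar).trans ?_
  gcongr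
  exact phi_mul_le_sqrt_etaV hd hρ.le hphi.le

end
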